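/- Let λ ≠ 0 be real, ε > 0, k > 1, 0 < η < 1, R > 1/η, 0 < P < X. With S_k(α) = Σ_{δX ≤ p^k ≤ X}(log p)e(p^k α) over primes and K_η(α) = (sin(πηα)/(πα))², one has ∫_{P/X}^{R} |S_k(λα)|⁴ K_η(α) dα ≪ η · max{X^{2/k}, X^{4/k − 1}} · X^{ε}. -/

import Mathlib

/-!
Up to its value at `0`, `K_η` is the Fejér kernel, whose Fourier transform is the tent function
`max(0, η - |x|)`. Expanding the fourth power therefore bounds the weighted moment by
`η (log X)⁴` times the number of prime quadruples with `|l (p₁^k + p₂^k - p₃^k - p₄^k)| ≤ η`,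
and it remains to show that, for integers `n ≍ N`, at most `C (Δ N^(4-k) + N^(2+γ))` quadruples
satisfy `|n₁^k + n₂^k - n₃^k - n₄^k| ≤ Δ`, with `γ > 0` arbitrarily small.

This counting bound is bootstrapped from the trivial case `γ = 2`. Poisson summation followed by
stationary phase (van der Corput's process B) replaces a Weyl sum with exponent `k` by one with the
dual exponent `k/(k-1)`, so a counting bound for the dual exponent controls the fourth moment of
the original sum over long ranges. Feeding that moment back into the count, at the optimal scale,
improves `γ` to `γ/(1+γ)`; iterating gives `γ = 2/(2j+1) → 0`.
-/

open Real MeasureTheory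

/-- `e(x) = exp(2πix)` -/
noncomputable def e (x : ℝ) : ℂ := Complex.exp (2 * Real.pi * Complex.I * x)

/-- `S_k(α) = Σ_{δX ≤ p^k ≤ X} (log p) e(p^k α)`, sum over primes `p`. -/
noncomputable def Sk (δ X k : ℝ) (α : ℝ) : ℂ :=
  ∑ p ∈ (Finset.Icc 1 (Nat.floor X)).filter
      (fun p : ℕ => p.Prime ∧ δ * X ≤ (p : ℝ) ^ k ∧ (p : ℝ) ^ k ≤ X),
    (Real.log p : ℂ) * e ((p : ℝ) ^ k * α)

/-- `K_η(α) = (sin(πηα)/(πα))²` -/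
noncomputable def Keta (η α : ℝ) : ℝ := (Real.sin (Real.pi * η * α) / (Real.pi * α)) ^ 2

lemma e_add (x y : ℝ) : e (x + y) = e x * e y := by
  rw [e, e, e, ← Complex.exp_add]
  push_cast
  ring_nf

lemma norm_e (x : ℝ) : ‖e x‖ = 1 := by
  rw [e, show (2 * π * Complex.I * x : ℂ) = ((2 * π * x : ℝ) : ℂ) * Complex.I by push_cast; ring]
  exact Complex.norm_exp_ofReal_mul_I _

lemma conj_e (x : ℝ) : (starRingEnd ℂ) (e x) = e (-x) := by
  simp only [e, ← Complex.exp_conj, map_mul, Complex.conj_I, Complex.conj_ofReal, map_ofNat]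
  push_cast
  ring_nf

@[fun_prop]
lemma continuous_e : Continuous e := by unfold e; fun_prop

lemma hasDerivAt_e (x : ℝ) : HasDerivAt e (2 * π * Complex.I * e x) x := by
  have h := ((Complex.ofRealCLM.hasDerivAt (x := x)).const_mul (2 * π * Complex.I : ℂ)).cexp
  exact h.congr_deriv (by simp [e, mul_comm])

lemma e_add_e_neg (x : ℝ) : e x + e (-x) = (2 * cos (2 * π * x) : ℝ) := by
  rw [← conj_e, Complex.add_conj, e,
    show (2 * π * Complex.I * x : ℂ) = ((2 * π * x : ℝ) : ℂ) * Complex.I by push_cast; ring,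
    Complex.exp_ofReal_mul_I_re]

section Fejer

/-- The tent function `x ↦ max(0, η - |x|)`, the Fourier transform of the Fejér kernel. -/
noncomputable def tent (η x : ℝ) : ℝ := max 0 (η - |x|)

/-- The Fejér kernel `(sin(πηα)/(πα))²`, with its continuous value `η²` at `α = 0`
(where the quotient in `Keta` has the junk value `0`). -/
noncomputable def fejer (η α : ℝ) : ℝ := (η * sinc (π * η * α)) ^ 2

variable {η : ℝ}

lemma tent_nonneg (η x : ℝ) : 0 ≤ tent η x := le_max_left _ _

@[fun_prop]
lemma continuous_tent (η : ℝ) : Continuous (tent η) := by unfold tent; fun_prop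

lemma tent_of_abs_le {x : ℝ} (h : |x| ≤ η) : tent η x = η - |x| :=
  max_eq_right (sub_nonneg.2 h)

lemma tent_of_le_abs {x : ℝ} (h : η ≤ |x|) : tent η x = 0 :=
  max_eq_left (sub_nonpos.2 h)

lemma tent_le (hη : 0 ≤ η) (x : ℝ) : tent η x ≤ η :=
  max_le hη (sub_le_self _ (abs_nonneg _))

lemma tent_neg (η x : ℝ) : tent η (-x) = tent η x := by rw [tent, tent, abs_neg]

lemma integrable_tent (η : ℝ) : Integrable (tent η) := by
  refine (continuous_tent η).integrable_of_hasCompactSupport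
    (HasCompactSupport.intro (isCompact_Icc (a := -η) (b := η)) fun x hx => tent_of_le_abs ?_)
  rw [Set.mem_Icc, ← abs_le, not_le] at hx
  exact hx.le

lemma fejer_nonneg (η α : ℝ) : 0 ≤ fejer η α := sq_nonneg _

@[fun_prop]
lemma continuous_fejer (η : ℝ) : Continuous (fejer η) := by
  have := continuous_sinc
  unfold fejer
  fun_prop

lemma Keta_ae_eq_fejer (hη : 0 < η) : Keta η =ᵐ[volume] fejer η := by
  filter_upwards [Measure.ae_ne volume 0] with α hα
  rw [Keta, fejer, sinc_of_ne_zero (by positivity)]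
  field_simp

lemma fejer_le (η α : ℝ) : fejer η α ≤ (η ^ 2 + 1) * (1 + α ^ 2)⁻¹ := by
  have hbound : fejer η α ≤ η ^ 2 := by
    have := sq_le_one_iff_abs_le_one _ |>.2 (abs_sinc_le_one (π * η * α))
    rw [fejer, mul_pow]
    nlinarith [sq_nonneg η]
  have hdecay : fejer η α * α ^ 2 ≤ 1 := by
    by_cases h : π * η * α = 0
    · obtain h | h : η = 0 ∨ α = 0 := by simpa [pi_ne_zero] using h
      all_goals simp [fejer, h]
    · have h1 := sq_nonneg (cos (π * η * α))
      have h2 := sin_sq_add_cos_sq (π * η * α)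
      have h3 : 1 ≤ π ^ 2 := by nlinarith [pi_gt_three]
      have h4 : fejer η α * α ^ 2 = sin (π * η * α) ^ 2 / π ^ 2 := by
        rw [fejer, sinc_of_ne_zero h]
        have hη := right_ne_zero_of_mul (left_ne_zero_of_mul h)
        have hα := right_ne_zero_of_mul h
        field_simp
      rw [h4, div_le_one (by positivity)]
      linarith
  rw [← div_eq_mul_inv, le_div_iff₀ (by positivity)]
  linarith

lemma integrable_fejer (η : ℝ) : Integrable (fejer η) := by
  refine (integrable_inv_one_add_sq.const_mul (η ^ 2 + 1)).mono'
    (continuous_fejer η).aestronglyMeasurable (.of_forall fun α => ?_)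
  rw [norm_of_nonneg (fejer_nonneg η α)]
  exact fejer_le η α

lemma le_fejer (hη : 0 ≤ η) {α : ℝ} (hα : |η * α| ≤ 1 / 2) : 4 / π ^ 2 * η ^ 2 ≤ fejer η α := by
  have hjordan : ∀ y, |y| ≤ π / 2 → 2 / π ≤ sinc y := fun y hy => by
    have key : ∀ z, 0 < z → z ≤ π / 2 → 2 / π ≤ sinc z := fun z hz hz' => by
      rw [sinc_of_ne_zero hz.ne', le_div_iff₀ hz]
      exact mul_le_sin hz.le hz'
    rcases lt_trichotomy y 0 with h | rfl | h
    · rw [← sinc_neg]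
      exact key _ (by linarith) ((neg_le_abs y).trans hy)
    · rw [sinc_zero, div_le_one pi_pos]
      exact two_le_pi
    · exact key y h ((le_abs_self y).trans hy)
  have h := hjordan (π * η * α) (by
    rw [mul_assoc, abs_mul, abs_of_pos pi_pos]
    nlinarith [pi_pos])
  calc 4 / π ^ 2 * η ^ 2 = (η * (2 / π)) ^ 2 := by ring
    _ ≤ fejer η α := by unfold fejer; gcongr

lemma integral_tent_mul_cos (hη : 0 ≤ η) (u : ℝ) :
    ∫ x in (0 : ℝ)..η, (η - x) * (2 * cos (2 * π * (u * x))) = fejer η u := by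
  rcases eq_or_ne u 0 with rfl | hu
  · have h : ∫ x in (0 : ℝ)..η, (η - x) = η ^ 2 / 2 := by
      rw [intervalIntegral.integral_sub (by simp) (by simp)]
      simp
      ring
    simp [fejer, h]
  have hπ := pi_ne_zero
  have hderiv : ∀ x ∈ Set.uIcc 0 η, HasDerivAt
      (fun x => (η - x) * sin (2 * π * (u * x)) / (π * u)
        - cos (2 * π * (u * x)) / (2 * (π * u) ^ 2))
      ((η - x) * (2 * cos (2 * π * (u * x)))) x := fun x _ => by
    have hlin : HasDerivAt (fun x => 2 * π * (u * x)) (2 * π * u) x := by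
      simpa [mul_assoc] using (hasDerivAt_id x).const_mul (2 * π * u)
    have h := ((((hasDerivAt_id x).const_sub η).mul hlin.sin).div_const (π * u)).sub
      (hlin.cos.div_const (2 * (π * u) ^ 2))
    refine h.congr_deriv ?_
    simp only [id]
    field_simp
    ring
  rw [intervalIntegral.integral_eq_sub_of_hasDerivAt hderiv
    (Continuous.intervalIntegrable (by fun_prop) _ _)]
  rcases hη.eq_or_lt with rfl | hη
  · simp [fejer]
  have hdouble : cos (2 * π * (u * η)) = 1 - 2 * sin (π * η * u) ^ 2 := by
    rw [show 2 * π * (u * η) = 2 * (π * η * u) by ring, cos_two_mul, cos_sq']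
    ring
  rw [hdouble, fejer, sinc_of_ne_zero (by positivity)]
  simp only [sub_self, zero_mul, zero_div, mul_zero, sin_zero, cos_zero, sub_zero]
  field_simp
  ring

lemma integral_e_mul_tent (hη : 0 ≤ η) (u : ℝ) :
    ∫ x, e (u * x) * (tent η x : ℂ) = fejer η u := by
  set f : ℝ → ℂ := fun x => e (u * x) * (tent η x : ℂ)
  have hf : Continuous f := by fun_prop
  have hsupp : Function.support f ⊆ Set.Ioc (-η) η := fun x hx => by
    have h : |x| < η := by
      by_contra! h
      exact hx (by simp [f, tent_of_le_abs h])
    exact ⟨(abs_lt.1 h).1, (abs_lt.1 h).2.le⟩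
  have hfold : ∀ x ∈ Set.uIcc 0 η,
      f (-x) + f x = (((η - x) * (2 * cos (2 * π * (u * x))) : ℝ) : ℂ) := fun x hx => by
    rw [Set.uIcc_of_le hη] at hx
    have ht : tent η x = η - x := by
      rw [tent_of_abs_le (by rw [abs_of_nonneg hx.1]; exact hx.2), abs_of_nonneg hx.1]
    simp only [f]
    rw [tent_neg, ← add_mul, mul_neg, add_comm, e_add_e_neg, ht]
    push_cast
    ring
  calc ∫ x, f x = ∫ x in (-η)..η, f x :=
        (intervalIntegral.integral_eq_integral_of_support_subset hsupp).symm
    _ = (∫ x in (-η)..0, f x) + ∫ x in 0..η, f x :=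
        (intervalIntegral.integral_add_adjacent_intervals
          (hf.intervalIntegrable _ _) (hf.intervalIntegrable _ _)).symm
    _ = ∫ x in 0..η, (f (-x) + f x) := by
        rw [intervalIntegral.integral_add (f := fun x => f (-x))
          ((hf.comp continuous_neg).intervalIntegrable _ _) (hf.intervalIntegrable _ _),
          intervalIntegral.integral_comp_neg, neg_zero]
    _ = fejer η u := by
        rw [intervalIntegral.integral_congr hfold, intervalIntegral.integral_ofReal,
          integral_tent_mul_cos hη]

open FourierTransform in
lemma integral_e_mul_fejer (hη : 0 ≤ η) (u : ℝ) :
    ∫ x, e (u * x) * (fejer η x : ℂ) = tent η u := by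
  have hchar : ∀ (f : ℝ → ℝ) (w : ℝ),
      𝓕⁻ (fun x => (f x : ℂ)) w = ∫ x, e (w * x) * (f x : ℂ) := fun f w => by
    rw [Real.fourierInv_eq' ]
    refine integral_congr_ae (.of_forall fun x => ?_)
    simp only [e, smul_eq_mul, RCLike.inner_apply, conj_trivial]
    push_cast
    ring_nf
  have hF : 𝓕 (fun x => (tent η x : ℂ)) = fun x => (fejer η x : ℂ) := by
    ext w
    rw [← integral_e_mul_tent hη, ← hchar, Real.fourierInv_eq_fourier_comp_neg]
    simp only [tent_neg]
  rw [← hchar, ← hF]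
  exact congrFun (Continuous.fourierInv_fourier_eq (by fun_prop) (integrable_tent η).ofReal
    (by rw [hF]; exact (integrable_fejer η).ofReal)) u

end Fejer

section ExponentialSums

variable {ι : Type*}

/-- The exponential sum `α ↦ Σ_{n ∈ S} c_n e(ω_n α)` with coefficients `c` and frequencies `ω`. -/
noncomputable def expSum (S : Finset ι) (c : ι → ℂ) (ω : ι → ℝ) (α : ℝ) : ℂ :=
  ∑ n ∈ S, c n * e (ω n * α)

/-- The additive energy at scale `Δ` of the family `(ω_n)_{n ∈ S}`: the number of quadruples with
`|ω_{n₁} + ω_{n₂} - ω_{n₃} - ω_{n₄}| ≤ Δ`. For `ω_n = n ^ k` this is the Robert–Sargos counting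
function. -/
noncomputable def energy (S : Finset ι) (ω : ι → ℝ) (Δ : ℝ) : ℕ :=
  (((S ×ˢ S) ×ˢ (S ×ˢ S)).filter fun q =>
    |ω q.1.1 + ω q.1.2 - (ω q.2.1 + ω q.2.2)| ≤ Δ).card

variable {S : Finset ι} {c : ι → ℂ} {ω : ι → ℝ}

@[fun_prop]
lemma continuous_expSum (S : Finset ι) (c : ι → ℂ) (ω : ι → ℝ) : Continuous (expSum S c ω) := by
  unfold expSum
  fun_prop

lemma norm_expSum_le_sum (S : Finset ι) (c : ι → ℂ) (ω : ι → ℝ) (α : ℝ) :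
    ‖expSum S c ω α‖ ≤ ∑ n ∈ S, ‖c n‖ :=
  (norm_sum_le _ _).trans_eq (by simp only [norm_mul, norm_e, mul_one])

lemma expSum_sq (S : Finset ι) (c : ι → ℂ) (ω : ι → ℝ) (α : ℝ) :
    expSum S c ω α ^ 2 =
      expSum (S ×ˢ S) (fun p => c p.1 * c p.2) (fun p => ω p.1 + ω p.2) α := by
  rw [sq, expSum, expSum, Finset.sum_mul_sum, Finset.sum_product]
  refine Finset.sum_congr rfl fun m _ => Finset.sum_congr rfl fun n _ => ?_
  rw [add_mul, e_add]
  ring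

lemma norm_sq_expSum (S : Finset ι) (c : ι → ℂ) (ω : ι → ℝ) (α : ℝ) :
    ((‖expSum S c ω α‖ ^ 2 : ℝ) : ℂ) =
      ∑ m ∈ S, ∑ n ∈ S, c m * (starRingEnd ℂ) (c n) * e ((ω m - ω n) * α) := by
  rw [Complex.ofReal_pow, ← Complex.mul_conj', expSum, map_sum, Finset.sum_mul_sum]
  refine Finset.sum_congr rfl fun m _ => Finset.sum_congr rfl fun n _ => ?_
  rw [map_mul, conj_e, sub_mul, sub_eq_add_neg, e_add]
  ring

lemma norm_expSum_neg (S : Finset ι) (w : ι → ℝ) (ω : ι → ℝ) (α : ℝ) :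
    ‖expSum S (fun n => (w n : ℂ)) ω (-α)‖ = ‖expSum S (fun n => (w n : ℂ)) ω α‖ := by
  rw [← Complex.norm_conj, expSum, expSum, map_sum]
  simp only [map_mul, Complex.conj_ofReal, conj_e, mul_neg, neg_neg]

lemma integrable_e_mul {K : ℝ → ℝ} (hK : Integrable K) (u : ℝ) :
    Integrable fun α => e (u * α) * (K α : ℂ) :=
  hK.ofReal.bdd_mul (c := 1) (by fun_prop) (.of_forall fun α => (norm_e _).le)

lemma integrable_norm_expSum_pow_mul (S : Finset ι) (c : ι → ℂ) (ω : ι → ℝ) (r : ℕ) {K : ℝ → ℝ}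
    (hK : Integrable K) : Integrable fun α => ‖expSum S c ω α‖ ^ r * K α := by
  refine hK.bdd_mul (c := (∑ n ∈ S, ‖c n‖) ^ r) (by fun_prop) (.of_forall fun α => ?_)
  rw [norm_pow, norm_norm]
  gcongr
  exact norm_expSum_le_sum S c ω α

lemma integral_norm_sq_expSum_mul (S : Finset ι) (c : ι → ℂ) (ω : ι → ℝ) {K : ℝ → ℝ}
    (hK : Integrable K) :
    ((∫ α, ‖expSum S c ω α‖ ^ 2 * K α : ℝ) : ℂ) =
      ∑ m ∈ S, ∑ n ∈ S, c m * (starRingEnd ℂ) (c n) * ∫ α, e ((ω m - ω n) * α) * (K α : ℂ) := by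
  have hterm : ∀ m n, Integrable fun α =>
      c m * (starRingEnd ℂ) (c n) * (e ((ω m - ω n) * α) * (K α : ℂ)) := fun m n =>
    (integrable_e_mul hK _).const_mul _
  calc ((∫ α, ‖expSum S c ω α‖ ^ 2 * K α : ℝ) : ℂ)
      = ∫ α, ((‖expSum S c ω α‖ ^ 2 * K α : ℝ) : ℂ) := integral_ofReal.symm
    _ = ∫ α, ∑ m ∈ S, ∑ n ∈ S,
          c m * (starRingEnd ℂ) (c n) * (e ((ω m - ω n) * α) * (K α : ℂ)) := by
        simp only [Complex.ofReal_mul, norm_sq_expSum, Finset.sum_mul, mul_assoc]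
    _ = _ := by
        rw [integral_finsetSum _ fun m _ => integrable_finsetSum _ fun n _ => hterm m n]
        refine Finset.sum_congr rfl fun m _ => ?_
        rw [integral_finsetSum _ fun n _ => hterm m n]
        simp only [integral_const_mul]

lemma integral_norm_pow_four_expSum_mul (S : Finset ι) (c : ι → ℂ) (ω : ι → ℝ) {K : ℝ → ℝ}
    (hK : Integrable K) :
    ((∫ α, ‖expSum S c ω α‖ ^ 4 * K α : ℝ) : ℂ) =
      ∑ q ∈ (S ×ˢ S) ×ˢ (S ×ˢ S), c q.1.1 * c q.1.2 * (starRingEnd ℂ) (c q.2.1 * c q.2.2) *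
        ∫ α, e ((ω q.1.1 + ω q.1.2 - (ω q.2.1 + ω q.2.2)) * α) * (K α : ℂ) := by
  simp only [show ∀ α, ‖expSum S c ω α‖ ^ 4 = ‖expSum S c ω α ^ 2‖ ^ 2 by
    intro α; rw [norm_pow, ← pow_mul], expSum_sq]
  rw [integral_norm_sq_expSum_mul _ _ _ hK, ← Finset.sum_product']

lemma energy_mono (S : Finset ι) (ω : ι → ℝ) : Monotone (energy S ω) := fun _ _ h =>
  Finset.card_le_card (Finset.monotone_filter_right _ fun _ _ hq => hq.trans h)

lemma energy_le_card_pow_four (S : Finset ι) (ω : ι → ℝ) (Δ : ℝ) :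
    energy S ω Δ ≤ S.card ^ 4 := by
  refine (Finset.card_filter_le _ _).trans_eq ?_
  simp only [Finset.card_product]
  ring

lemma energy_const_mul (S : Finset ι) (ω : ι → ℝ) {l : ℝ} (hl : l ≠ 0) (Δ : ℝ) :
    energy S (fun n => l * ω n) Δ = energy S ω (Δ / |l|) := by
  simp only [energy, ← mul_add, ← mul_sub, abs_mul, le_div_iff₀' (abs_pos.2 hl)]

lemma integral_norm_pow_four_mul_fejer_le {η L : ℝ} (hη : 0 ≤ η) (hc : ∀ n ∈ S, ‖c n‖ ≤ L)
    (ω : ι → ℝ) :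
    ∫ α, ‖expSum S c ω α‖ ^ 4 * fejer η α ≤ η * L ^ 4 * energy S ω η := by
  set d : (ι × ι) × (ι × ι) → ℝ := fun q => ω q.1.1 + ω q.1.2 - (ω q.2.1 + ω q.2.2)
  have hterm : ∀ q ∈ (S ×ˢ S) ×ˢ (S ×ˢ S),
      ‖c q.1.1 * c q.1.2 * (starRingEnd ℂ) (c q.2.1 * c q.2.2) * (tent η (d q) : ℂ)‖ ≤
        if |d q| ≤ η then η * L ^ 4 else 0 := fun q hq => by
    simp only [Finset.mem_product] at hq
    split_ifs with h
    · have hL : 0 ≤ L := (norm_nonneg _).trans (hc _ hq.1.1)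
      simp only [norm_mul, RCLike.norm_conj, Complex.norm_real, norm_of_nonneg (tent_nonneg _ _)]
      calc ‖c q.1.1‖ * ‖c q.1.2‖ * (‖c q.2.1‖ * ‖c q.2.2‖) * tent η (d q)
          ≤ L * L * (L * L) * η := by
            gcongr
            exacts [tent_nonneg _ _, hc _ hq.1.1, hc _ hq.1.2, hc _ hq.2.1, hc _ hq.2.2,
              tent_le hη _]
        _ = η * L ^ 4 := by ring
    · rw [tent_of_le_abs (not_le.1 h).le]
      simp
  calc ∫ α, ‖expSum S c ω α‖ ^ 4 * fejer η α
      ≤ ‖((∫ α, ‖expSum S c ω α‖ ^ 4 * fejer η α : ℝ) : ℂ)‖ := by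
        rw [Complex.norm_real]
        exact le_norm_self _
    _ ≤ ∑ q ∈ (S ×ˢ S) ×ˢ (S ×ˢ S), if |d q| ≤ η then η * L ^ 4 else 0 := by
        rw [integral_norm_pow_four_expSum_mul S c ω (integrable_fejer η)]
        simp only [integral_e_mul_fejer hη]
        exact (norm_sum_le _ _).trans (Finset.sum_le_sum hterm)
    _ = η * L ^ 4 * energy S ω η := by
        rw [← Finset.sum_filter, Finset.sum_const, nsmul_eq_mul, energy, mul_comm]

lemma energy_mul_le_integral_mul_tent {S' : Finset ι} (hS : S ⊆ S') {w : ι → ℝ} (hw : ∀ n, 0 ≤ w n)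
    (hw1 : ∀ n ∈ S, 1 ≤ w n) (ω : ι → ℝ) {U : ℝ} (hU : 0 < U) :
    4 / π ^ 2 * U ^ 2 * energy S ω (1 / (2 * U)) ≤
      ∫ α, ‖expSum S' (fun n => (w n : ℂ)) ω α‖ ^ 4 * tent U α := by
  set d : (ι × ι) × (ι × ι) → ℝ := fun q => ω q.1.1 + ω q.1.2 - (ω q.2.1 + ω q.2.2)
  set W : (ι × ι) × (ι × ι) → ℝ := fun q => w q.1.1 * w q.1.2 * (w q.2.1 * w q.2.2)
  have hW : ∀ q, 0 ≤ W q := fun q =>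
    mul_nonneg (mul_nonneg (hw _) (hw _)) (mul_nonneg (hw _) (hw _))
  have hexpand : ∫ α, ‖expSum S' (fun n => (w n : ℂ)) ω α‖ ^ 4 * tent U α =
      ∑ q ∈ (S' ×ˢ S') ×ˢ (S' ×ˢ S'), W q * fejer U (d q) := by
    apply Complex.ofReal_injective
    rw [integral_norm_pow_four_expSum_mul _ _ _ (integrable_tent U)]
    simp only [integral_e_mul_tent hU.le, map_mul, Complex.conj_ofReal, W, d, Complex.ofReal_sum,
      Complex.ofReal_mul]
  rw [hexpand, energy, mul_comm, ← nsmul_eq_mul]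
  refine (Finset.card_nsmul_le_sum _ (fun q => W q * fejer U (d q)) _ fun q hq => ?_).trans
    (Finset.sum_le_sum_of_subset_of_nonneg ?_ fun q _ _ => mul_nonneg (hW q) (fejer_nonneg _ _))
  · simp only [Finset.mem_filter, Finset.mem_product] at hq
    obtain ⟨⟨⟨h1, h2⟩, h3, h4⟩, hd⟩ := hq
    have hW1 : 1 ≤ W q := one_le_mul_of_one_le_of_one_le
      (one_le_mul_of_one_le_of_one_le (hw1 _ h1) (hw1 _ h2))
      (one_le_mul_of_one_le_of_one_le (hw1 _ h3) (hw1 _ h4))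
    have hUd : |U * d q| ≤ 1 / 2 := by
      rw [abs_mul, abs_of_pos hU, ← le_div_iff₀' hU]
      exact hd.trans_eq (by field_simp)
    exact (le_fejer hU.le hUd).trans (le_mul_of_one_le_left (fejer_nonneg _ _) hW1)
  · exact (Finset.filter_subset _ _).trans
      (Finset.product_subset_product (Finset.product_subset_product hS hS)
        (Finset.product_subset_product hS hS))

lemma energy_le_integral_norm_pow_four {S' : Finset ι} (hS : S ⊆ S') {w : ι → ℝ}
    (hw : ∀ n, 0 ≤ w n) (hw1 : ∀ n ∈ S, 1 ≤ w n) (ω : ι → ℝ) {U : ℝ} (hU : 0 < U) :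
    energy S ω (1 / (2 * U)) ≤
      π ^ 2 / (2 * U) * ∫ α in (0 : ℝ)..U, ‖expSum S' (fun n => (w n : ℂ)) ω α‖ ^ 4 := by
  set F := expSum S' (fun n => (w n : ℂ)) ω
  have hF : Continuous fun α => ‖F α‖ ^ 4 := by fun_prop
  have hsupp : Function.support (fun α => ‖F α‖ ^ 4 * tent U α) ⊆ Set.Ioc (-U) U := fun α hα => by
    have h : |α| < U := by
      by_contra! h
      exact hα (by simp [tent_of_le_abs h])
    exact ⟨(abs_lt.1 h).1, (abs_lt.1 h).2.le⟩
  have heven : ∫ α in (-U)..0, ‖F α‖ ^ 4 = ∫ α in (0 : ℝ)..U, ‖F α‖ ^ 4 := by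
    rw [← neg_zero, ← intervalIntegral.integral_comp_neg]
    simp only [F, norm_expSum_neg, neg_zero]
  have htrunc : ∫ α, ‖F α‖ ^ 4 * tent U α ≤ 2 * U * ∫ α in (0 : ℝ)..U, ‖F α‖ ^ 4 :=
    calc ∫ α, ‖F α‖ ^ 4 * tent U α
        = ∫ α in (-U)..U, ‖F α‖ ^ 4 * tent U α :=
          (intervalIntegral.integral_eq_integral_of_support_subset hsupp).symm
      _ ≤ ∫ α in (-U)..U, U * ‖F α‖ ^ 4 := by
          refine intervalIntegral.integral_mono_on (by linarith)
            (Continuous.intervalIntegrable (by fun_prop) _ _)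
            (Continuous.intervalIntegrable (by fun_prop) _ _) fun α _ => ?_
          rw [mul_comm]
          exact mul_le_mul_of_nonneg_right (tent_le hU.le α) (by positivity)
      _ = 2 * U * ∫ α in (0 : ℝ)..U, ‖F α‖ ^ 4 := by
          rw [intervalIntegral.integral_const_mul,
            ← intervalIntegral.integral_add_adjacent_intervals (b := 0)
              (hF.intervalIntegrable _ _) (hF.intervalIntegrable _ _), heven]
          ring
  have h := (energy_mul_le_integral_mul_tent hS hw hw1 ω hU).trans htrunc
  have := pi_pos
  calc (energy S ω (1 / (2 * U)) : ℝ)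
      = π ^ 2 / (4 * U ^ 2) * (4 / π ^ 2 * U ^ 2 * energy S ω (1 / (2 * U))) := by field_simp
    _ ≤ π ^ 2 / (4 * U ^ 2) * (2 * U * ∫ α in (0 : ℝ)..U, ‖F α‖ ^ 4) := by gcongr
    _ = _ := by field_simp; ring

lemma integral_norm_pow_four_le_energy {L : ℝ} (hc : ∀ n ∈ S, ‖c n‖ ≤ L) (ω : ι → ℝ) {Y : ℝ}
    (hY : 0 < Y) :
    ∫ α in (0 : ℝ)..Y, ‖expSum S c ω α‖ ^ 4 ≤
      π ^ 2 / 2 * Y * L ^ 4 * energy S ω (1 / (2 * Y)) := by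
  set η := 1 / (2 * Y) with hη
  have hηpos : 0 < η := by positivity
  have hpt : ∀ α ∈ Set.Ioc 0 Y, 4 / π ^ 2 * η ^ 2 * ‖expSum S c ω α‖ ^ 4 ≤
      ‖expSum S c ω α‖ ^ 4 * fejer η α := fun α hα => by
    rw [mul_comm]
    gcongr
    refine le_fejer hηpos.le ?_
    rw [abs_of_nonneg (mul_nonneg hηpos.le hα.1.le), hη, div_mul_eq_mul_div,
      div_le_div_iff₀ (by positivity) (by norm_num)]
    linarith [hα.2]
  have hint := integrable_norm_expSum_pow_mul S c ω 4 (integrable_fejer η)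
  have h : 4 / π ^ 2 * η ^ 2 * ∫ α in (0 : ℝ)..Y, ‖expSum S c ω α‖ ^ 4 ≤
      η * L ^ 4 * energy S ω η :=
    calc 4 / π ^ 2 * η ^ 2 * ∫ α in (0 : ℝ)..Y, ‖expSum S c ω α‖ ^ 4
        ≤ ∫ α in Set.Ioc 0 Y, ‖expSum S c ω α‖ ^ 4 * fejer η α := by
          rw [intervalIntegral.integral_of_le hY.le, ← integral_const_mul]
          exact setIntegral_mono_on (Continuous.integrableOn_Ioc (by fun_prop))
            hint.integrableOn measurableSet_Ioc hpt
      _ ≤ ∫ α, ‖expSum S c ω α‖ ^ 4 * fejer η α :=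
          setIntegral_le_integral hint
            (.of_forall fun α => mul_nonneg (by positivity) (fejer_nonneg _ _))
      _ ≤ η * L ^ 4 * energy S ω η := integral_norm_pow_four_mul_fejer_le hηpos.le hc ω
  have := pi_pos
  calc ∫ α in (0 : ℝ)..Y, ‖expSum S c ω α‖ ^ 4
      = π ^ 2 / (4 * η ^ 2) *
          (4 / π ^ 2 * η ^ 2 * ∫ α in (0 : ℝ)..Y, ‖expSum S c ω α‖ ^ 4) := by field_simp
    _ ≤ π ^ 2 / (4 * η ^ 2) * (η * L ^ 4 * energy S ω η) := by gcongr
    _ = π ^ 2 / 2 * Y * L ^ 4 * energy S ω η := by rw [hη]; field_simp; ring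

lemma integrable_norm_expSum_pow_mul_Keta (S : Finset ι) (c : ι → ℂ) (ω : ι → ℝ) (r : ℕ) {η : ℝ}
    (hη : 0 < η) : Integrable fun α => ‖expSum S c ω α‖ ^ r * Keta η α :=
  (integrable_norm_expSum_pow_mul S c ω r (integrable_fejer η)).congr <|
    (Keta_ae_eq_fejer hη).mono fun α h => by simp only [h]

lemma integral_norm_pow_four_mul_Keta_le {η L : ℝ} (hη : 0 < η) (hc : ∀ n ∈ S, ‖c n‖ ≤ L)
    (ω : ι → ℝ) :
    ∫ α, ‖expSum S c ω α‖ ^ 4 * Keta η α ≤ η * L ^ 4 * energy S ω η :=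
  (integral_congr_ae ((Keta_ae_eq_fejer hη).mono fun α h => by simp only [h])).trans_le
    (integral_norm_pow_four_mul_fejer_le hη.le hc ω)

end ExponentialSums

section VanDerCorput

open Set

variable {A B : ℝ} {φ φ' φ'' : ℝ → ℝ}

lemma norm_integral_mul_e_le (hAB : A ≤ B) {g G : ℝ → ℝ} (hg : ∀ t ∈ Icc A B, |g t| ≤ G t)
    (hG : IntervalIntegrable G volume A B) (φ : ℝ → ℝ) :
    ‖∫ t in A..B, (g t : ℂ) * e (φ t)‖ ≤ ∫ t in A..B, G t := by
  refine intervalIntegral.norm_integral_le_of_norm_le hAB (.of_forall fun t ht => ?_) hG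
  rw [norm_mul, norm_e, mul_one, Complex.norm_real]
  exact hg t (Ioc_subset_Icc_self ht)

lemma intervalIntegrable_mul_e {g : ℝ → ℝ} (hg : ContinuousOn g (uIcc A B))
    (hφ : ContinuousOn φ (uIcc A B)) :
    IntervalIntegrable (fun t => (g t : ℂ) * e (φ t)) volume A B :=
  ((Complex.continuous_ofReal.comp_continuousOn hg).mul
    (continuous_e.comp_continuousOn hφ)).intervalIntegrable

lemma integral_mul_deriv_mul_e {v v' : ℝ → ℝ}
    (hv : ∀ t ∈ uIcc A B, HasDerivAt v (v' t) t) (hφ : ∀ t ∈ uIcc A B, HasDerivAt φ (φ' t) t)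
    (hv' : ContinuousOn v' (uIcc A B)) (hφ' : ContinuousOn φ' (uIcc A B))
    (hA : v A = 0) (hB : v B = 0) :
    ∫ t in A..B, ((v t * φ' t : ℝ) : ℂ) * e (φ t) =
      -(1 / (2 * π * Complex.I)) * ∫ t in A..B, (v' t : ℂ) * e (φ t) := by
  have hφc : ContinuousOn φ (uIcc A B) := HasDerivAt.continuousOn hφ
  have he : ∀ t ∈ uIcc A B, HasDerivAt (fun t => e (φ t))
      (φ' t * (2 * π * Complex.I * e (φ t))) t := fun t ht =>
    ((hasDerivAt_e (φ t)).scomp t (hφ t ht)).congr_deriv Complex.real_smul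
  have hparts := intervalIntegral.integral_mul_deriv_eq_deriv_mul
    (fun t ht => (hv t ht).ofReal_comp) he
    (Complex.continuous_ofReal.comp_continuousOn hv').intervalIntegrable
    ((Complex.continuous_ofReal.comp_continuousOn hφ').mul
      (continuousOn_const.mul (continuous_e.comp_continuousOn hφc))).intervalIntegrable
  rw [hA, hB, Complex.ofReal_zero, zero_mul, zero_mul, sub_self, zero_sub] at hparts
  have hfactor : ∫ t in A..B, (v t : ℂ) * (φ' t * (2 * π * Complex.I * e (φ t))) =
      2 * π * Complex.I * ∫ t in A..B, ((v t * φ' t : ℝ) : ℂ) * e (φ t) := by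
    rw [← intervalIntegral.integral_const_mul]
    refine intervalIntegral.integral_congr fun t _ => ?_
    push_cast
    ring
  rw [neg_mul, ← mul_neg, ← hparts, hfactor, one_div_mul_eq_div,
    mul_div_cancel_left₀ _ Complex.two_pi_I_ne_zero]

lemma norm_neg_one_div_two_pi_I : ‖(-(1 / (2 * π * Complex.I)) : ℂ)‖ = 1 / (2 * π) := by
  simp [abs_of_pos pi_pos]

lemma hasDerivAt_div_one_add_sq (x : ℝ) :
    HasDerivAt (fun x : ℝ => x / (1 + x ^ 2)) ((1 - x ^ 2) / (1 + x ^ 2) ^ 2) x := by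
  have h := (hasDerivAt_id x).div (((hasDerivAt_id x).pow 2).const_add 1)
    (by positivity : 1 + x ^ 2 ≠ 0)
  refine h.congr_deriv ?_
  simp only [id, Pi.pow_apply]
  push_cast
  ring

lemma abs_div_one_add_sq_le_one (x : ℝ) : |x / (1 + x ^ 2)| ≤ 1 := by
  rw [abs_div, abs_of_pos (by positivity : 0 < 1 + x ^ 2), div_le_one (by positivity)]
  nlinarith [sq_abs x, sq_nonneg (|x| - 1)]

lemma abs_one_sub_sq_div_le (x : ℝ) : |(1 - x ^ 2) / (1 + x ^ 2) ^ 2| ≤ 1 / (1 + x ^ 2) := by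
  rw [abs_div, abs_of_pos (by positivity : 0 < (1 + x ^ 2) ^ 2),
    div_le_div_iff₀ (by positivity) (by positivity), one_mul, sq (1 + x ^ 2)]
  gcongr
  exact abs_le.2 ⟨by linarith, by linarith [sq_nonneg x]⟩

lemma integral_deriv_div_one_add_sq_le_pi {ρ ρ' : ℝ → ℝ}
    (hρ : ∀ t ∈ uIcc A B, HasDerivAt ρ (ρ' t) t) (hρ' : ContinuousOn ρ' (uIcc A B)) :
    ∫ t in A..B, ρ' t / (1 + ρ t ^ 2) ≤ π := by
  have hint : ∫ t in A..B, ρ' t / (1 + ρ t ^ 2) = arctan (ρ B) - arctan (ρ A) := by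
    refine intervalIntegral.integral_eq_sub_of_hasDerivAt
      (fun t ht => (hρ t ht).arctan.congr_deriv (by ring)) (ContinuousOn.intervalIntegrable ?_)
    exact hρ'.div (continuousOn_const.add ((HasDerivAt.continuousOn hρ).pow 2))
      fun t _ => by positivity
  rw [hint]
  linarith [arctan_lt_pi_div_two (ρ B), neg_pi_div_two_lt_arctan (ρ A)]

lemma abs_le_mul_sub_of_abs_deriv_le {u u' : ℝ → ℝ} {D : ℝ}
    (hu : ∀ t ∈ Icc A B, HasDerivAt u (u' t) t) (hA : u A = 0) (hD : ∀ t ∈ Icc A B, |u' t| ≤ D)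
    {t : ℝ} (ht : t ∈ Icc A B) : |u t| ≤ D * (B - A) := by
  have hmem : A ∈ Icc A B := left_mem_Icc.2 (ht.1.trans ht.2)
  have h := Convex.norm_image_sub_le_of_norm_hasDerivWithin_le (C := D)
    (fun x hx => (hu x hx).hasDerivWithinAt) (fun x hx => hD x hx) (convex_Icc A B) hmem ht
  rw [hA, sub_zero, norm_eq_abs, norm_eq_abs, abs_of_nonneg (sub_nonneg.2 ht.1)] at h
  have hD0 : 0 ≤ D := (abs_nonneg _).trans (hD A hmem)
  exact h.trans (by gcongr; exact ht.2)

/- Splitting `1 = 1/(1 + (rφ')²) + r(rφ'/(1 + (rφ')²)) φ'` isolates a neighbourhood of the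
stationary point and leaves a term with a factor `φ'`, ready for integration by parts. -/
lemma integral_mul_e_eq_add {u u' : ℝ → ℝ} (r : ℝ)
    (hu : ∀ t ∈ uIcc A B, HasDerivAt u (u' t) t) (hφ : ∀ t ∈ uIcc A B, HasDerivAt φ (φ' t) t)
    (hφ' : ∀ t ∈ uIcc A B, HasDerivAt φ' (φ'' t) t) (hu' : ContinuousOn u' (uIcc A B))
    (hφ'' : ContinuousOn φ'' (uIcc A B)) (hA : u A = 0) (hB : u B = 0) :
    ∫ t in A..B, (u t : ℂ) * e (φ t) =
      (∫ t in A..B, ((u t / (1 + (r * φ' t) ^ 2) : ℝ) : ℂ) * e (φ t)) +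
      -(1 / (2 * π * Complex.I)) * ∫ t in A..B,
        ((u' t * (r * (r * φ' t / (1 + (r * φ' t) ^ 2))) +
          u t * (r * ((1 - (r * φ' t) ^ 2) / (1 + (r * φ' t) ^ 2) ^ 2 * (r * φ'' t))) : ℝ) : ℂ) *
        e (φ t) := by
  have hφc := HasDerivAt.continuousOn hφ
  have hφ'c := HasDerivAt.continuousOn hφ'
  have huc := HasDerivAt.continuousOn hu
  have hpos : ∀ t, 1 + (r * φ' t) ^ 2 ≠ 0 := fun t => by positivity
  have hv : ∀ t ∈ uIcc A B, HasDerivAt (fun t => u t * (r * (r * φ' t / (1 + (r * φ' t) ^ 2))))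
      (u' t * (r * (r * φ' t / (1 + (r * φ' t) ^ 2))) +
        u t * (r * ((1 - (r * φ' t) ^ 2) / (1 + (r * φ' t) ^ 2) ^ 2 * (r * φ'' t)))) t :=
    fun t ht => (hu t ht).mul <| HasDerivAt.const_mul r <|
      HasDerivAt.comp (h₂ := fun x => x / (1 + x ^ 2)) t (hasDerivAt_div_one_add_sq _)
        ((hφ' t ht).const_mul r)
  rw [← integral_mul_deriv_mul_e hv hφ (by fun_prop (disch := simp [hpos])) hφ'c
      (by simp [hA]) (by simp [hB]),
    ← intervalIntegral.integral_add
      (intervalIntegrable_mul_e (by fun_prop (disch := simp [hpos])) hφc)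
      (intervalIntegrable_mul_e (by fun_prop (disch := simp [hpos])) hφc)]
  refine intervalIntegral.integral_congr fun t _ => ?_
  rw [← add_mul, ← Complex.ofReal_add]
  congr 2
  have := hpos t
  field_simp

lemma abs_add_mul_le_of_bounds {a b D E r y κ : ℝ} (hr : 0 ≤ r) (hκ : 0 ≤ κ) (ha : |a| ≤ D)
    (hb : |b| ≤ E) :
    |a * (r * (y / (1 + y ^ 2))) + b * (r * ((1 - y ^ 2) / (1 + y ^ 2) ^ 2 * κ))| ≤
      D * r + E * r * (κ / (1 + y ^ 2)) := by
  have hD : 0 ≤ D := (abs_nonneg a).trans ha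
  have hE : 0 ≤ E := (abs_nonneg b).trans hb
  refine (abs_add_le _ _).trans (add_le_add ?_ ?_)
  · rw [abs_mul, abs_mul, abs_of_nonneg hr]
    gcongr
    exact mul_le_of_le_one_right hr (abs_div_one_add_sq_le_one y)
  · calc |b * (r * ((1 - y ^ 2) / (1 + y ^ 2) ^ 2 * κ))|
        = |b| * (r * (|(1 - y ^ 2) / (1 + y ^ 2) ^ 2| * κ)) := by
          rw [abs_mul, abs_mul, abs_mul, abs_of_nonneg hr, abs_of_nonneg hκ]
      _ ≤ E * (r * (1 / (1 + y ^ 2) * κ)) := by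
          gcongr
          exact abs_one_sub_sq_div_le y
      _ = E * r * (κ / (1 + y ^ 2)) := by ring

lemma norm_integral_mul_e_le_of_one_le_deriv2 {u u' : ℝ → ℝ} {D r : ℝ} (hAB : A ≤ B) (hr : 0 < r)
    (hu : ∀ t ∈ Icc A B, HasDerivAt u (u' t) t) (hφ : ∀ t ∈ Icc A B, HasDerivAt φ (φ' t) t)
    (hφ' : ∀ t ∈ Icc A B, HasDerivAt φ' (φ'' t) t) (hu' : ContinuousOn u' (Icc A B))
    (hφ'' : ContinuousOn φ'' (Icc A B)) (hA : u A = 0) (hB : u B = 0)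
    (hD : ∀ t ∈ Icc A B, |u' t| ≤ D) (hpeak : ∀ t ∈ Icc A B, 1 ≤ r * (r * φ'' t)) :
    ‖∫ t in A..B, (u t : ℂ) * e (φ t)‖ ≤ 4 * (D * (B - A) * r) := by
  have hAB' : uIcc A B = Icc A B := uIcc_of_le hAB
  have hD0 : 0 ≤ D := (abs_nonneg _).trans (hD A (left_mem_Icc.2 hAB))
  have hE : 0 ≤ D * (B - A) := mul_nonneg hD0 (sub_nonneg.2 hAB)
  have huE := fun t ht => abs_le_mul_sub_of_abs_deriv_le hu hA hD (t := t) ht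
  set K : ℝ → ℝ := fun t => r * φ'' t / (1 + (r * φ' t) ^ 2)
  have hKπ : ∫ t in A..B, K t ≤ π := integral_deriv_div_one_add_sq_le_pi
    (fun t ht => (hφ' t (hAB' ▸ ht)).const_mul r) (hAB' ▸ hφ''.const_mul r)
  have hKi : IntervalIntegrable K volume A B := by
    have := HasDerivAt.continuousOn hφ'
    exact ContinuousOn.intervalIntegrable
      (hAB' ▸ by fun_prop (disch := intros; positivity) : ContinuousOn K (uIcc A B))
  have hnear := norm_integral_mul_e_le hAB (g := fun t => u t / (1 + (r * φ' t) ^ 2))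
    (G := fun t => D * (B - A) * r * K t) (fun t ht => by
      rw [abs_div, abs_of_pos (by positivity : 0 < 1 + (r * φ' t) ^ 2), ← mul_div_assoc,
        mul_assoc _ r]
      gcongr
      exact (huE t ht).trans (le_mul_of_one_le_right hE (hpeak t ht))) (hKi.const_mul _) φ
  have hfar := norm_integral_mul_e_le hAB (G := fun t => D * r + D * (B - A) * r * K t)
    (fun t ht => abs_add_mul_le_of_bounds (y := r * φ' t) hr.le
      (pos_of_mul_pos_right (one_pos.trans_le (hpeak t ht)) hr.le).le (hD t ht) (huE t ht))
    (intervalIntegrable_const.add (hKi.const_mul _)) φ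
  rw [intervalIntegral.integral_const_mul] at hnear
  rw [intervalIntegral.integral_add intervalIntegrable_const (hKi.const_mul _),
    intervalIntegral.integral_const, intervalIntegral.integral_const_mul, smul_eq_mul] at hfar
  have hE' : 0 ≤ D * (B - A) * r := mul_nonneg hE hr.le
  have hKE := mul_le_mul_of_nonneg_left hKπ hE'
  rw [integral_mul_e_eq_add r (hAB' ▸ hu) (hAB' ▸ hφ) (hAB' ▸ hφ') (hAB' ▸ hu') (hAB' ▸ hφ'') hA hB]
  refine (norm_add_le _ _).trans ?_
  rw [norm_mul, norm_neg_one_div_two_pi_I]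
  calc _ ≤ D * (B - A) * r * π + 1 / (2 * π) * (D * (B - A) * r * (1 + π)) := by
        gcongr
        · exact hnear.trans hKE
        · exact hfar.trans (by linarith)
    _ = D * (B - A) * r * (π + 1 / 2 + 1 / (2 * π)) := by field_simp; ring
    _ ≤ D * (B - A) * r * (3.15 + 1 / 2 + 1 / (2 * 3)) := by
        gcongr
        exacts [pi_lt_d2.le, pi_gt_three.le]
    _ ≤ 4 * (D * (B - A) * r) := by linarith

lemma norm_integral_mul_e_le_of_le_deriv2 {u u' : ℝ → ℝ} {D lam : ℝ} (hAB : A ≤ B) (hlam : 0 < lam)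
    (hu : ∀ t ∈ Icc A B, HasDerivAt u (u' t) t) (hφ : ∀ t ∈ Icc A B, HasDerivAt φ (φ' t) t)
    (hφ' : ∀ t ∈ Icc A B, HasDerivAt φ' (φ'' t) t) (hu' : ContinuousOn u' (Icc A B))
    (hφ'' : ContinuousOn φ'' (Icc A B)) (hA : u A = 0) (hB : u B = 0)
    (hD : ∀ t ∈ Icc A B, |u' t| ≤ D) (hle : ∀ t ∈ Icc A B, lam ≤ φ'' t) :
    ‖∫ t in A..B, (u t : ℂ) * e (φ t)‖ ≤ 4 * (D * (B - A)) / √lam := by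
  refine (norm_integral_mul_e_le_of_one_le_deriv2 hAB (by positivity : 0 < 1 / √lam) hu hφ hφ' hu'
    hφ'' hA hB hD fun t ht => ?_).trans_eq (by ring)
  rw [← mul_assoc, div_mul_div_comm, mul_self_sqrt hlam.le, one_mul, one_div_mul_eq_div,
    one_le_div hlam]
  exact hle t ht

end VanDerCorput

section OscillatoryIntegrals

open Set

/-- A nonnegative `C²` cutoff function whose support lies in the positive interval `(A, B)`. -/
structure IsCutoff (w : ℝ → ℝ) (A B : ℝ) : Prop where
  pos : 0 < A
  lt : A < B
  contDiff : ContDiff ℝ 2 w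
  nonneg : ∀ t, 0 ≤ w t
  support_subset : Function.support w ⊆ Ioo A B

namespace IsCutoff

variable {w : ℝ → ℝ} {A B : ℝ}

lemma pos_of_mem (hw : IsCutoff w A B) {t : ℝ} (ht : t ∈ Icc A B) : 0 < t := hw.pos.trans_le ht.1

lemma continuous (hw : IsCutoff w A B) : Continuous w := hw.contDiff.continuous

lemma contDiff_deriv (hw : IsCutoff w A B) : ContDiff ℝ 1 (deriv w) :=
  ContDiff.deriv' (by simpa only [one_add_one_eq_two] using hw.contDiff)

lemma continuous_deriv (hw : IsCutoff w A B) : Continuous (deriv w) := hw.contDiff_deriv.continuous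

lemma continuous_deriv_deriv (hw : IsCutoff w A B) : Continuous (deriv (deriv w)) :=
  hw.contDiff_deriv.continuous_deriv le_rfl

lemma hasDerivAt (hw : IsCutoff w A B) (t : ℝ) : HasDerivAt w (deriv w t) t :=
  (hw.contDiff.differentiable two_ne_zero t).hasDerivAt

lemma hasDerivAt_deriv (hw : IsCutoff w A B) (t : ℝ) :
    HasDerivAt (deriv w) (deriv (deriv w) t) t :=
  (hw.contDiff_deriv.differentiable one_ne_zero t).hasDerivAt

lemma eq_zero_of_notMem (hw : IsCutoff w A B) {t : ℝ} (ht : t ∉ Ioo A B) : w t = 0 :=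
  Function.notMem_support.1 fun h => ht (hw.support_subset h)

lemma left_eq_zero (hw : IsCutoff w A B) : w A = 0 := hw.eq_zero_of_notMem fun h => h.1.false

lemma right_eq_zero (hw : IsCutoff w A B) : w B = 0 := hw.eq_zero_of_notMem fun h => h.2.false

lemma deriv_eq_zero (hw : IsCutoff w A B) {t : ℝ} (ht : w t = 0) : deriv w t = 0 :=
  IsLocalMin.deriv_eq_zero (.of_forall fun s => ht.trans_le (hw.nonneg s))

lemma exists_bound (hw : IsCutoff w A B) : ∃ W > 0, ∀ t ∈ Icc A B,
    |w t| ≤ W ∧ |deriv w t| ≤ W ∧ |deriv (deriv w) t| ≤ W := by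
  have := hw.continuous
  have := hw.continuous_deriv
  have := hw.continuous_deriv_deriv
  obtain ⟨W, hW⟩ := (isCompact_Icc (a := A) (b := B)).exists_bound_of_continuousOn
    (f := fun t => (w t, deriv w t, deriv (deriv w) t)) (by fun_prop)
  refine ⟨max W 1, by positivity, fun t ht => ?_⟩
  have h := norm_prod_le_iff.1 ((hW t ht).trans (le_max_left W 1))
  exact ⟨h.1, norm_prod_le_iff.1 h.2⟩

end IsCutoff

lemma exists_isCutoff_eq_one {a b : ℝ} (ha : 0 < a) (hab : a < b) :
    ∃ (w : ℝ → ℝ) (A B : ℝ), IsCutoff w A B ∧ ∀ t ∈ Icc a b, w t = 1 := by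
  let f : ContDiffBump ((a + b) / 2) :=
    { rIn := (b - a) / 2, rOut := b / 2, rIn_pos := by linarith, rIn_lt_rOut := by linarith }
  refine ⟨f, (a + b) / 2 - b / 2, (a + b) / 2 + b / 2,
    ⟨by linarith, by linarith, f.contDiff, fun t => f.nonneg, ?_⟩, fun t ht => ?_⟩
  · rw [f.support_eq, Real.ball_eq_Ioo]
  · apply f.one_of_mem_closedBall
    rwa [Real.closedBall_eq_Icc, show (a + b) / 2 - (b - a) / 2 = a by ring,
      show (a + b) / 2 + (b - a) / 2 = b by ring]

lemma exists_rpow_mem_Icc (q : ℝ) {A : ℝ} (hA : 0 < A) (B : ℝ) :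
    ∃ c > 0, ∃ C > 0, ∀ t ∈ Icc A B, t ^ q ∈ Icc c C := by
  have hbdd (p : ℝ) : ∃ C > 0, ∀ t ∈ Icc A B, t ^ p ≤ C := by
    obtain ⟨C, hC⟩ := isCompact_Icc.exists_bound_of_continuousOn
      (continuousOn_id.rpow_const (p := p) fun t (ht : t ∈ Icc A B) => .inl (hA.trans_le ht.1).ne')
    exact ⟨max C 1, by positivity,
      fun t ht => (le_abs_self _).trans ((hC t ht).trans (le_max_left _ _))⟩
  obtain ⟨C, hC, hle⟩ := hbdd q
  obtain ⟨C', hC', hle'⟩ := hbdd (-q)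
  refine ⟨C'⁻¹, inv_pos.2 hC', C, hC, fun t ht => ⟨?_, hle t ht⟩⟩
  have ht0 : 0 < t := hA.trans_le ht.1
  exact inv_le_of_inv_le₀ (rpow_pos_of_pos ht0 q) (rpow_neg ht0.le q ▸ hle' t ht)

section NonstationaryPhase

variable {A B : ℝ} {φ φ' φ'' φ''' u u' u'' : ℝ → ℝ}

lemma integral_mul_e_eq_integral_div_deriv (hφ : ∀ t ∈ uIcc A B, HasDerivAt φ (φ' t) t)
    (hφ' : ∀ t ∈ uIcc A B, HasDerivAt φ' (φ'' t) t) (hφ'' : ContinuousOn φ'' (uIcc A B))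
    (hu : ∀ t ∈ uIcc A B, HasDerivAt u (u' t) t) (hu' : ContinuousOn u' (uIcc A B))
    (hA : u A = 0) (hB : u B = 0) (hne : ∀ t ∈ uIcc A B, φ' t ≠ 0) :
    ∫ t in A..B, (u t : ℂ) * e (φ t) = -(1 / (2 * π * Complex.I)) *
      ∫ t in A..B, ((u' t / φ' t - u t * φ'' t / φ' t ^ 2 : ℝ) : ℂ) * e (φ t) := by
  have hcu := HasDerivAt.continuousOn hu
  have hcφ' := HasDerivAt.continuousOn hφ'
  rw [← integral_mul_deriv_mul_e (v := fun t => u t / φ' t) (φ' := φ')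
    (fun t ht => ((hu t ht).div (hφ' t ht) (hne t ht)).congr_deriv (by
      have := hne t ht
      field_simp)) hφ (by fun_prop (disch := simpa using hne)) hcφ' (by simp [hA]) (by simp [hB])]
  refine intervalIntegral.integral_congr fun t ht => ?_
  simp only [div_mul_cancel₀ _ (hne t ht)]

lemma abs_iterated_div_deriv_le {u u' u'' p p' p'' W E lam : ℝ} (hlam : 0 < lam)
    (hp : lam ≤ |p|) (hp' : |p'| ≤ E * lam) (hp'' : |p''| ≤ E * lam) (hu : |u| ≤ W) (hu' : |u'| ≤ W)
    (hu'' : |u''| ≤ W) :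
    |(u'' - 3 * (u' * (p' / p)) - u * (p'' / p) + 3 * (u * (p' / p) ^ 2)) / p ^ 2| ≤
      W * (1 + 4 * E + 3 * E ^ 2) / lam ^ 2 := by
  have hdiv {q : ℝ} (hq : |q| ≤ E * lam) : |q / p| ≤ E := by
    rw [abs_div, div_le_iff₀ (hlam.trans_le hp)]
    exact hq.trans (mul_le_mul_of_nonneg_left hp
      (nonneg_of_mul_nonneg_left ((abs_nonneg q).trans hq) hlam))
  have hx := hdiv hp'
  have hy := hdiv hp''
  have hW : 0 ≤ W := (abs_nonneg u).trans hu
  have hE : 0 ≤ E := (abs_nonneg _).trans hx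
  have h1 : |3 * (u' * (p' / p))| ≤ 3 * (W * E) := by
    rw [abs_mul, abs_mul, Nat.abs_ofNat]
    gcongr
  have h2 : |u * (p'' / p)| ≤ W * E := by
    rw [abs_mul]
    gcongr
  have h3 : |3 * (u * (p' / p) ^ 2)| ≤ 3 * (W * E ^ 2) := by
    rw [abs_mul, abs_mul, abs_pow, Nat.abs_ofNat]
    gcongr
  rw [abs_div, abs_pow]
  refine div_le_div₀ (by positivity) ?_ (by positivity) (by gcongr)
  calc _ ≤ |u''| + |3 * (u' * (p' / p))| + |u * (p'' / p)| + |3 * (u * (p' / p) ^ 2)| :=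
        (abs_add_le _ _).trans (add_le_add_left ((abs_sub _ _).trans
          (add_le_add_left (abs_sub _ _) _)) _)
    _ ≤ W * (1 + 4 * E + 3 * E ^ 2) := by linarith

lemma hasDerivAt_div_sub_mul_div_sq {u u' p p' : ℝ → ℝ} {u₂ p₂ t : ℝ}
    (hu : HasDerivAt u (u' t) t) (hu' : HasDerivAt u' u₂ t) (hp : HasDerivAt p (p' t) t)
    (hp' : HasDerivAt p' p₂ t) (hne : p t ≠ 0) :
    HasDerivAt (fun t => u' t / p t - u t * p' t / p t ^ 2)
      (u₂ / p t - (2 * u' t * p' t + u t * p₂) / p t ^ 2 + 2 * u t * p' t ^ 2 / p t ^ 3) t := by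
  refine ((hu'.div hp hne).sub
    ((hu.mul hp').div (hp.pow 2) (pow_ne_zero 2 hne))).congr_deriv ?_
  simp only [Pi.mul_apply, Pi.pow_apply]
  field_simp
  ring

/-- The method of nonstationary phase: integrating by parts twice gains a factor `lam⁻²`. -/
lemma norm_integral_mul_e_le_of_le_abs_deriv {W E lam : ℝ} (hAB : A ≤ B) (hlam : 0 < lam)
    (hφ : ∀ t ∈ Icc A B, HasDerivAt φ (φ' t) t) (hφ' : ∀ t ∈ Icc A B, HasDerivAt φ' (φ'' t) t)
    (hφ'' : ∀ t ∈ Icc A B, HasDerivAt φ'' (φ''' t) t) (hφ''' : ContinuousOn φ''' (Icc A B))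
    (hu : ∀ t ∈ Icc A B, HasDerivAt u (u' t) t) (hu' : ∀ t ∈ Icc A B, HasDerivAt u' (u'' t) t)
    (hu'' : ContinuousOn u'' (Icc A B)) (hA : u A = 0) (hB : u B = 0) (hA' : u' A = 0)
    (hB' : u' B = 0) (hle : ∀ t ∈ Icc A B, lam ≤ |φ' t|)
    (hE : ∀ t ∈ Icc A B, |φ'' t| ≤ E * lam ∧ |φ''' t| ≤ E * lam)
    (hW : ∀ t ∈ Icc A B, |u t| ≤ W ∧ |u' t| ≤ W ∧ |u'' t| ≤ W) :
    ‖∫ t in A..B, (u t : ℂ) * e (φ t)‖ ≤ W * (1 + 4 * E + 3 * E ^ 2) * (B - A) / lam ^ 2 := by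
  have hne : ∀ t ∈ Icc A B, φ' t ≠ 0 := fun t ht => abs_pos.1 (hlam.trans_le (hle t ht))
  have hI := uIcc_of_le hAB
  set v : ℝ → ℝ := fun t => u' t / φ' t - u t * φ'' t / φ' t ^ 2 with hv
  set v' : ℝ → ℝ := fun t => u'' t / φ' t - (2 * u' t * φ'' t + u t * φ''' t) / φ' t ^ 2 +
    2 * u t * φ'' t ^ 2 / φ' t ^ 3 with hv'
  have hvd : ∀ t ∈ Icc A B, HasDerivAt v (v' t) t := fun t ht =>
    hasDerivAt_div_sub_mul_div_sq (hu t ht) (hu' t ht) (hφ' t ht) (hφ'' t ht) (hne t ht)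
  have hcu := HasDerivAt.continuousOn hu
  have hcu' := HasDerivAt.continuousOn hu'
  have hcφ' := HasDerivAt.continuousOn hφ'
  have hcφ'' := HasDerivAt.continuousOn hφ''
  have hcv' : ContinuousOn v' (Icc A B) := ((hu''.div hcφ' hne).sub (ContinuousOn.div
      (by fun_prop) (hcφ'.pow 2) fun t ht => pow_ne_zero 2 (hne t ht))).add
    (ContinuousOn.div (by fun_prop) (hcφ'.pow 3) fun t ht => pow_ne_zero 3 (hne t ht))
  have hfirst := integral_mul_e_eq_integral_div_deriv (hI ▸ hφ) (hI ▸ hφ') (hI ▸ hcφ'') (hI ▸ hu)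
    (hI ▸ hcu') hA hB (hI ▸ hne)
  have hsecond := integral_mul_e_eq_integral_div_deriv (hI ▸ hφ) (hI ▸ hφ') (hI ▸ hcφ'')
    (hI ▸ hvd) (hI ▸ hcv') (by simp [hv, hA, hA']) (by simp [hv, hB, hB']) (hI ▸ hne)
  have hbound := norm_integral_mul_e_le hAB (g := fun t => v' t / φ' t - v t * φ'' t / φ' t ^ 2)
    (fun t ht => (abs_iterated_div_deriv_le hlam (hle t ht) (hE t ht).1 (hE t ht).2 (hW t ht).1
      (hW t ht).2.1 (hW t ht).2.2).trans_eq' (congrArg _ (by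
        have := hne t ht
        simp only [hv, hv']
        field_simp
        ring))) intervalIntegrable_const φ
  rw [intervalIntegral.integral_const, smul_eq_mul] at hbound
  rw [hfirst, hsecond, norm_mul, norm_mul, norm_neg_one_div_two_pi_I, ← mul_assoc]
  have hπ : 1 / (2 * π) ≤ 1 := by
    rw [div_le_one (by positivity)]
    linarith [pi_gt_three]
  calc _ ≤ 1 * ‖∫ t in A..B, ((v' t / φ' t - v t * φ'' t / φ' t ^ 2 : ℝ) : ℂ) * e (φ t)‖ := by
        gcongr
        exact mul_le_one₀ hπ (by positivity) hπ
    _ ≤ _ := (one_mul _).trans_le (hbound.trans_eq (by ring))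

end NonstationaryPhase

lemma hasDerivAt_rpow_sub_one {t : ℝ} (ht : 0 < t) (q : ℝ) :
    HasDerivAt (fun t : ℝ => t ^ (q - 1)) ((q - 1) * t ^ (q - 2)) t := by
  simpa only [sub_sub, one_add_one_eq_two] using hasDerivAt_rpow_const (p := q - 1) (.inl ht.ne')

lemma continuousOn_rpow_const {A : ℝ} (hA : 0 < A) (B q : ℝ) :
    ContinuousOn (fun t : ℝ => t ^ q) (Icc A B) :=
  continuousOn_id.rpow_const fun _ ht => .inl (hA.trans_le ht.1).ne'

lemma IsCutoff.norm_integral_mul_e_rpow_sub_mul_le {w : ℝ → ℝ} {A B : ℝ} (hw : IsCutoff w A B)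
    (k : ℝ) {c : ℝ} (hc : 0 < c) :
    ∃ C > 0, ∀ X > 0, ∀ ν : ℝ,
      (∀ t ∈ Icc A B, c * (X + |ν|) ≤ |X * (k * t ^ (k - 1)) - ν|) →
      ‖∫ t in A..B, (w t : ℂ) * e (X * t ^ k - ν * t)‖ ≤ C / (X + |ν|) ^ 2 := by
  obtain ⟨W, hW, hbd⟩ := hw.exists_bound
  have hcont := ((continuousOn_rpow_const hw.pos B (k - 3)).const_mul (k - 2)).const_mul (k - 1)
    |>.const_mul k
  obtain ⟨D, hD⟩ := isCompact_Icc.exists_bound_of_continuousOn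
    ((((continuousOn_rpow_const hw.pos B (k - 2)).const_mul (k - 1)).const_mul k).prodMk hcont)
  have hD0 : 0 ≤ D := (norm_nonneg _).trans (hD A (left_mem_Icc.2 hw.lt.le))
  set E := D / c
  have hE : 0 ≤ E := div_nonneg hD0 hc.le
  have hBA : 0 < B - A := sub_pos.2 hw.lt
  refine ⟨W * (1 + 4 * E + 3 * E ^ 2) * (B - A) / c ^ 2, by positivity, fun X hX ν hν => ?_⟩
  have hZ : X ≤ X + |ν| := le_add_of_nonneg_right (abs_nonneg ν)
  have hE_lam {q : ℝ} (hq : |q| ≤ D) : |X * q| ≤ E * (c * (X + |ν|)) := by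
    rw [abs_mul, abs_of_pos hX, ← mul_assoc, div_mul_cancel₀ _ hc.ne', mul_comm]
    gcongr
  refine (norm_integral_mul_e_le_of_le_abs_deriv (lam := c * (X + |ν|)) (W := W) (E := E) hw.lt.le
    (by positivity)
    (φ' := fun t => X * (k * t ^ (k - 1)) - ν) (φ'' := fun t => X * (k * ((k - 1) * t ^ (k - 2))))
    (φ''' := fun t => X * (k * ((k - 1) * ((k - 2) * t ^ (k - 3))))) (fun t ht => ?_)
    (fun t ht => ?_) (fun t ht => ?_) ?_ (fun t _ => hw.hasDerivAt t)
    (fun t _ => hw.hasDerivAt_deriv t) hw.continuous_deriv_deriv.continuousOn hw.left_eq_zero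
    hw.right_eq_zero (hw.deriv_eq_zero hw.left_eq_zero) (hw.deriv_eq_zero hw.right_eq_zero) hν
    (fun t ht => ⟨hE_lam (norm_prod_le_iff.1 (hD t ht)).1, hE_lam (norm_prod_le_iff.1 (hD t ht)).2⟩)
    hbd).trans_eq (by field_simp)
  · exact ((hasDerivAt_rpow_const (p := k) (.inl (hw.pos_of_mem ht).ne')).const_mul X).sub
      (hasDerivAt_const_mul ν)
  · exact (((hasDerivAt_rpow_sub_one (hw.pos_of_mem ht) k).const_mul k).const_mul X).sub_const ν
  · have := hasDerivAt_rpow_const (p := k - 2) (.inl (hw.pos_of_mem ht).ne')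
    rw [show k - 2 - 1 = k - 3 by ring] at this
    exact ((this.const_mul (k - 1)).const_mul k).const_mul X
  · exact hcont.const_mul X

section RpowSlopeInverse

variable {r s : ℝ}

lemma analyticAt_dslope {f : ℝ → ℝ} {a x : ℝ} (ha : AnalyticAt ℝ f a)
    (hx : AnalyticAt ℝ f x) : AnalyticAt ℝ (dslope f a) x := by
  rcases eq_or_ne x a with rfl | hne
  · obtain ⟨p, hp⟩ := ha
    exact ⟨_, hp.has_fpower_series_dslope_fslope⟩
  · refine (((analyticAt_id.sub analyticAt_const).inv (sub_ne_zero.2 hne)).mul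
      (hx.sub analyticAt_const) : AnalyticAt ℝ (fun y => (y - a)⁻¹ * (f y - f a)) x).congr ?_
    filter_upwards [isOpen_ne.mem_nhds hne] with y hy
    rw [dslope_of_ne _ hy, slope_def_field]
    exact inv_mul_eq_div _ _

lemma dslope_rpow_one_ne_zero (hr : r ≠ 0) (hs : 0 < s) :
    dslope (fun s : ℝ => s ^ r) 1 s ≠ 0 := by
  rcases eq_or_ne s 1 with rfl | hne
  · rw [dslope_same, (hasDerivAt_rpow_const (.inl one_ne_zero)).deriv, one_rpow, mul_one]
    exact hr
  · rw [dslope_of_ne _ hne, slope_def_field, one_rpow]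
    refine div_ne_zero (sub_ne_zero.2 fun h => hne ?_) (sub_ne_zero.2 hne)
    exact (rpow_left_inj hs.le zero_le_one hr).1 (h.trans (one_rpow r).symm)

lemma exists_hasDerivAt_mul_rpow_sub_one_eq (hr : r ≠ 0) :
    ∃ Q Q' Q'' : ℝ → ℝ, (∀ s > 0, HasDerivAt Q (Q' s) s) ∧ (∀ s > 0, HasDerivAt Q' (Q'' s) s) ∧
      ContinuousOn Q'' (Ioi 0) ∧ ∀ s > 0, Q s * (s ^ r - 1) = s - 1 := by
  have han (s : ℝ) (hs : 0 < s) : AnalyticAt ℝ (fun s : ℝ => s ^ r) s :=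
    (contDiffAt_rpow_const_of_ne hs.ne').analyticAt
  have hQ (s : ℝ) (hs : 0 < s) : AnalyticAt ℝ (dslope (fun s : ℝ => s ^ r) 1)⁻¹ s :=
    (analyticAt_dslope (han 1 one_pos) (han s hs)).inv (dslope_rpow_one_ne_zero hr hs)
  refine ⟨_, _, _, fun s hs => (hQ s hs).differentiableAt.hasDerivAt,
    fun s hs => (hQ s hs).deriv.differentiableAt.hasDerivAt,
    fun s hs => (hQ s hs).deriv.deriv.continuousAt.continuousWithinAt, fun s hs => ?_⟩
  have hslope := sub_smul_dslope (fun s : ℝ => s ^ r) 1 s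
  rw [one_rpow, smul_eq_mul] at hslope
  rw [← hslope, Pi.inv_apply, mul_comm, mul_assoc,
    mul_inv_cancel₀ (dslope_rpow_one_ne_zero hr hs), mul_one]

end RpowSlopeInverse

section StationaryPhase

variable {k σ t : ℝ}

/-- The gap at `t` between the power function `t ↦ t ^ k` and its tangent line at `σ`. -/
noncomputable def tangentGap (k σ t : ℝ) : ℝ := t ^ k - σ ^ k - k * σ ^ (k - 1) * (t - σ)

lemma hasDerivAt_tangentGap (σ : ℝ) (ht : 0 < t) :
    HasDerivAt (tangentGap k σ) (k * (t ^ (k - 1) - σ ^ (k - 1))) t := by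
  have := ((hasDerivAt_rpow_const (p := k) (.inl ht.ne')).sub_const (σ ^ k)).sub
    (((hasDerivAt_id t).sub_const σ).const_mul (k * σ ^ (k - 1)))
  exact this.congr_deriv (by ring)

lemma hasDerivAt_deriv_tangentGap (σ : ℝ) (ht : 0 < t) :
    HasDerivAt (fun t => k * (t ^ (k - 1) - σ ^ (k - 1))) (k * ((k - 1) * t ^ (k - 2))) t :=
  ((hasDerivAt_rpow_sub_one ht k).sub_const _).const_mul k

lemma hasDerivAt_tangentGap_left (t : ℝ) (hσ : 0 < σ) :
    HasDerivAt (fun σ => tangentGap k σ t) (k * ((k - 1) * σ ^ (k - 2)) * (σ - t)) σ := by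
  have := ((hasDerivAt_rpow_const (p := k) (.inl hσ.ne')).const_sub (t ^ k)).sub
    (((hasDerivAt_rpow_sub_one hσ k).const_mul k).mul ((hasDerivAt_id σ).const_sub t))
  exact this.congr_deriv (by simp only [id]; ring)

lemma norm_integral_mul_e_tangentGap_le {A B : ℝ} (hk : 1 < k) (hA : 0 < A) (hAB : A < B) :
    ∃ C > 0, ∀ (X D σ : ℝ) (u u' : ℝ → ℝ), 0 < X → (∀ t ∈ Icc A B, HasDerivAt u (u' t) t) →
      ContinuousOn u' (Icc A B) → u A = 0 → u B = 0 → (∀ t ∈ Icc A B, |u' t| ≤ D) →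
      ‖∫ t in A..B, (u t : ℂ) * e (X * tangentGap k σ t)‖ ≤ C * D / √X := by
  obtain ⟨c, hc, _, _, hcle⟩ := exists_rpow_mem_Icc (k - 2) hA B
  have hk1 : 0 < k - 1 := sub_pos.2 hk
  have hBA : 0 < B - A := sub_pos.2 hAB
  refine ⟨4 * (B - A) / √(k * ((k - 1) * c)), by positivity,
    fun X D σ u u' hX hu hu' huA huB hD => ?_⟩
  have hpos : ∀ t ∈ Icc A B, 0 < t := fun t ht => hA.trans_le ht.1
  refine (norm_integral_mul_e_le_of_le_deriv2 hAB.le (by positivity : 0 < X * (k * ((k - 1) * c)))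
    hu (fun t ht => (hasDerivAt_tangentGap σ (hpos t ht)).const_mul X)
    (fun t ht => (hasDerivAt_deriv_tangentGap σ (hpos t ht)).const_mul X) hu'
    ((((continuousOn_rpow_const hA B _).const_mul _).const_mul _).const_mul _) huA huB hD
    fun t ht => ?_).trans_eq ?_
  · gcongr
    exact (hcle t ht).1
  · rw [sqrt_mul hX.le]
    field_simp

lemma rpow_sub_one_eq_rpow_sub_two_mul (hσ : 0 < σ) (k : ℝ) : σ ^ (k - 1) = σ ^ (k - 2) * σ := by
  rw [← rpow_add_one hσ.ne']
  ring_nf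

lemma mul_rpow_sub_rpow_eq {q : ℝ} (ht : 0 < t) (hσ : 0 < σ)
    (hq : q * ((t / σ) ^ (k - 1) - 1) = t / σ - 1) :
    q * (t ^ (k - 1) - σ ^ (k - 1)) = σ ^ (k - 2) * (t - σ) := by
  have hσ' := (rpow_pos_of_pos hσ (k - 1)).ne'
  calc q * (t ^ (k - 1) - σ ^ (k - 1))
      = σ ^ (k - 1) * (q * ((t / σ) ^ (k - 1) - 1)) := by
        rw [div_rpow ht.le hσ.le]
        field_simp
    _ = σ ^ (k - 2) * (t - σ) := by
        rw [hq, rpow_sub_one_eq_rpow_sub_two_mul hσ]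
        field_simp

/-- Dividing `t - σ` by the derivative `t ^ (k - 1) - σ ^ (k - 1)` of the phase leaves a `C²`
amplitude, with bounds uniform in the stationary point `σ`. -/
lemma IsCutoff.exists_mul_rpow_sub_rpow_eq {w : ℝ → ℝ} {A B : ℝ} (hw : IsCutoff w A B)
    (hk : k ≠ 1) {a : ℝ} (ha : 0 < a) (b : ℝ) :
    ∃ D > 0, ∀ σ ∈ Icc a b, ∃ v v' v'' : ℝ → ℝ, (∀ t ∈ Icc A B, HasDerivAt v (v' t) t) ∧
      (∀ t ∈ Icc A B, HasDerivAt v' (v'' t) t) ∧ ContinuousOn v'' (Icc A B) ∧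
      (v A = 0 ∧ v B = 0 ∧ v' A = 0 ∧ v' B = 0) ∧ (∀ t ∈ Icc A B, |v'' t| ≤ D) ∧
      ∀ t ∈ Icc A B, v t * (t ^ (k - 1) - σ ^ (k - 1)) = σ ^ (k - 2) * (w t * (t - σ)) := by
  obtain ⟨Q, Q', Q'', hQ, hQ', hQ'', hQeq⟩ :=
    exists_hasDerivAt_mul_rpow_sub_one_eq (sub_ne_zero.2 hk)
  set v'' : ℝ → ℝ → ℝ := fun σ t => deriv (deriv w) t * Q (t / σ) +
    2 * (deriv w t * (Q' (t / σ) / σ)) + w t * (Q'' (t / σ) / σ ^ 2) with hv''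
  have hσ0 : ∀ σ ∈ Icc a b, 0 < σ := fun σ hσ => ha.trans_le hσ.1
  have hcont : ContinuousOn (fun p : ℝ × ℝ => v'' p.1 p.2) (Icc a b ×ˢ Icc A B) := by
    have hne : ∀ p ∈ Icc a b ×ˢ Icc A B, p.1 ≠ 0 := fun p hp => (hσ0 _ hp.1).ne'
    have hdiv := continuousOn_snd.div continuousOn_fst hne
    have hmaps : MapsTo (fun p : ℝ × ℝ => p.2 / p.1) (Icc a b ×ˢ Icc A B) (Ioi 0) :=
      fun p hp => div_pos (hw.pos_of_mem hp.2) (hσ0 _ hp.1)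
    have h₀ := (HasDerivAt.continuousOn hQ).comp hdiv hmaps
    have h₁ := ((HasDerivAt.continuousOn hQ').comp hdiv hmaps).div continuousOn_fst hne
    have h₂ := (hQ''.comp hdiv hmaps).div (continuousOn_fst.pow 2) fun p hp =>
      pow_ne_zero 2 (hne p hp)
    have hsnd {f : ℝ → ℝ} (hf : Continuous f) :
        ContinuousOn (fun p : ℝ × ℝ => f p.2) (Icc a b ×ˢ Icc A B) :=
      (hf.comp continuous_snd).continuousOn
    exact (((hsnd hw.continuous_deriv_deriv).mul h₀).add
      (((hsnd hw.continuous_deriv).mul h₁).const_mul 2)).add ((hsnd hw.continuous).mul h₂)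
  obtain ⟨D, hD⟩ := (isCompact_Icc.prod isCompact_Icc).exists_bound_of_continuousOn hcont
  refine ⟨max D 1, by positivity, fun σ hσ => ?_⟩
  have hdiv (t : ℝ) : HasDerivAt (fun t => t / σ) (1 / σ) t := (hasDerivAt_id t).div_const σ
  have hts (t : ℝ) (ht : t ∈ Icc A B) : 0 < t / σ := div_pos (hw.pos_of_mem ht) (hσ0 σ hσ)
  refine ⟨fun t => w t * Q (t / σ), fun t => deriv w t * Q (t / σ) + w t * (Q' (t / σ) / σ), v'' σ,
    fun t ht => ?_, fun t ht => ?_,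
    hcont.comp (f := fun t => (σ, t)) (by fun_prop) fun t ht => ⟨hσ, ht⟩,
    by simp [hw.left_eq_zero, hw.right_eq_zero, hw.deriv_eq_zero],
    fun t ht => (hD (σ, t) ⟨hσ, ht⟩).trans (le_max_left _ _), fun t ht => ?_⟩
  · refine ((hw.hasDerivAt t).mul ((hQ _ (hts t ht)).comp t (hdiv t))).congr_deriv ?_
    simp only [Function.comp]
    ring
  · refine (((hw.hasDerivAt_deriv t).mul ((hQ _ (hts t ht)).comp t (hdiv t))).add
      ((hw.hasDerivAt t).mul (((hQ' _ (hts t ht)).comp t (hdiv t)).div_const σ))).congr_deriv ?_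
    simp only [hv'', Function.comp]
    ring
  · rw [mul_assoc, mul_rpow_sub_rpow_eq (hw.pos_of_mem ht) (hσ0 σ hσ) (hQeq _ (hts t ht))]
    ring

lemma IsCutoff.norm_integral_mul_sub_mul_e_le {w : ℝ → ℝ} {A B : ℝ} (hw : IsCutoff w A B)
    (hk : 1 < k) {a : ℝ} (ha : 0 < a) (b : ℝ) :
    ∃ C > 0, ∀ X > 0, ∀ σ ∈ Icc a b,
      ‖∫ t in A..B, ((w t * (t - σ) : ℝ) : ℂ) * e (X * tangentGap k σ t)‖ ≤ C / (X * √X) := by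
  obtain ⟨D, hD, hv⟩ := hw.exists_mul_rpow_sub_rpow_eq hk.ne' ha b
  obtain ⟨C, hC, hvdc⟩ := norm_integral_mul_e_tangentGap_le hk hw.pos hw.lt
  obtain ⟨c, hc, _, _, hσc⟩ := exists_rpow_mem_Icc (k - 2) ha b
  refine ⟨C * D / (k * c), by positivity, fun X hX σ hσ => ?_⟩
  have hσ0 : 0 < σ := ha.trans_le hσ.1
  obtain ⟨v, v', v'', hvd, hv'd, hv'', ⟨hvA, hvB, hv'A, hv'B⟩, hvD, hveq⟩ := hv σ hσ
  have hI := uIcc_of_le hw.lt.le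
  set J := ∫ t in A..B, ((w t * (t - σ) : ℝ) : ℂ) * e (X * tangentGap k σ t)
  set g := X * k * σ ^ (k - 2)
  have hg : 0 < g := by positivity
  have hibp : (g : ℂ) * J = -(1 / (2 * π * Complex.I)) *
      ∫ t in A..B, (v' t : ℂ) * e (X * tangentGap k σ t) := by
    rw [← integral_mul_deriv_mul_e (hI ▸ hvd)
      (fun t ht => (hasDerivAt_tangentGap σ (hw.pos_of_mem (hI ▸ ht))).const_mul X)
      (hI ▸ HasDerivAt.continuousOn hv'd)
      (hI ▸ HasDerivAt.continuousOn fun t ht =>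
        (hasDerivAt_deriv_tangentGap σ (hw.pos_of_mem ht)).const_mul X) hvA hvB,
      ← intervalIntegral.integral_const_mul]
    refine intervalIntegral.integral_congr fun t ht => ?_
    rw [hI] at ht
    have : v t * (X * (k * (t ^ (k - 1) - σ ^ (k - 1)))) = g * (w t * (t - σ)) := by
      linear_combination X * k * hveq t ht
    simp only [this, Complex.ofReal_mul, mul_assoc]
  have hle : g * ‖J‖ ≤ C * D / √X := by
    have hnorm := congrArg norm hibp
    rw [norm_mul, norm_mul, Complex.norm_of_nonneg hg.le, norm_neg_one_div_two_pi_I] at hnorm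
    refine hnorm.trans_le ((mul_le_of_le_one_left (norm_nonneg _) ?_).trans
      (hvdc X D σ v' v'' hX hv'd hv'' hv'A hv'B hvD))
    rw [div_le_one (by positivity)]
    linarith [pi_gt_three]
  calc ‖J‖ ≤ C * D / √X / g := (le_div_iff₀' hg).2 hle
    _ ≤ C * D / √X / (X * k * c) := by
        gcongr
        exact mul_le_mul_of_nonneg_left (hσc σ hσ).1 (by positivity)
    _ = C * D / (k * c) / (X * √X) := by field_simp

lemma hasDerivAt_intervalIntegral_of_continuousOn {E : Type*} [NormedAddCommGroup E]
    [NormedSpace ℝ E] {F F' : ℝ → ℝ → E} {A B x : ℝ} {s : Set ℝ} (hs : IsCompact s)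
    (hx : s ∈ nhds x) (hF : ∀ y ∈ s, ContinuousOn (F y) (uIcc A B))
    (hF' : ContinuousOn (fun p : ℝ × ℝ => F' p.1 p.2) (s ×ˢ uIcc A B))
    (hderiv : ∀ y ∈ s, ∀ t ∈ uIcc A B, HasDerivAt (fun y => F y t) (F' y t) y) :
    HasDerivAt (fun y => ∫ t in A..B, F y t) (∫ t in A..B, F' x t) x := by
  obtain ⟨M, hM⟩ := (hs.prod isCompact_uIcc).exists_bound_of_continuousOn hF'
  have hxs := mem_of_mem_nhds hx
  have hF'x : ContinuousOn (F' x) (uIcc A B) :=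
    hF'.comp (f := fun t => (x, t)) (by fun_prop) fun t ht => ⟨hxs, ht⟩
  have hmeas {f : ℝ → E} (hf : ContinuousOn f (uIcc A B)) :
      AEStronglyMeasurable f (volume.restrict (uIoc A B)) :=
    (hf.mono uIoc_subset_uIcc).aestronglyMeasurable measurableSet_uIoc
  exact (intervalIntegral.hasDerivAt_integral_of_dominated_loc_of_deriv_le (bound := fun _ => M) hx
    (Filter.eventually_of_mem hx fun y hy => hmeas (hF y hy)) (hF x hxs).intervalIntegrable
    (hmeas hF'x) (.of_forall fun t ht y hy => hM (y, t) ⟨hy, uIoc_subset_uIcc ht⟩)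
    intervalIntegrable_const
    (.of_forall fun t ht y hy => hderiv y hy t (uIoc_subset_uIcc ht))).2

/-- The slowly varying factor `∫ w(t) e(X (t ^ k - σ ^ k - k σ ^ (k-1) (t - σ))) dt` left after
removing from `∫ w(t) e(X t ^ k - ν t) dt` the oscillation of its stationary point `σ`. -/
noncomputable def stationaryAmplitude (w : ℝ → ℝ) (A B k X σ : ℝ) : ℂ :=
  ∫ t in A..B, (w t : ℂ) * e (X * tangentGap k σ t)

variable {w : ℝ → ℝ} {A B : ℝ}

lemma IsCutoff.norm_stationaryAmplitude_le (hw : IsCutoff w A B) (hk : 1 < k) :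
    ∃ C > 0, ∀ X > 0, ∀ σ : ℝ, ‖stationaryAmplitude w A B k X σ‖ ≤ C / √X := by
  obtain ⟨W, hW, hbd⟩ := hw.exists_bound
  obtain ⟨C, hC, hvdc⟩ := norm_integral_mul_e_tangentGap_le hk hw.pos hw.lt
  exact ⟨C * W, by positivity, fun X hX σ => hvdc X W σ w (deriv w) hX
    (fun t _ => hw.hasDerivAt t) hw.continuous_deriv.continuousOn hw.left_eq_zero
    hw.right_eq_zero fun t ht => (hbd t ht).2.1⟩

lemma IsCutoff.hasDerivAt_stationaryAmplitude (hw : IsCutoff w A B) (k X : ℝ) (hσ : 0 < σ) :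
    HasDerivAt (stationaryAmplitude w A B k X)
      (-(2 * π * Complex.I * (X * (k * ((k - 1) * σ ^ (k - 2))) : ℝ)) *
        ∫ t in A..B, ((w t * (t - σ) : ℝ) : ℂ) * e (X * tangentGap k σ t)) σ := by
  have hpos (y : ℝ) (hy : y ∈ Icc (σ / 2) (2 * σ)) : 0 < y := (half_pos hσ).trans_le hy.1
  have hI := uIcc_of_le hw.lt.le
  have hrpow {q : ℝ} {f : ℝ × ℝ → ℝ} (hf : Continuous f)
      (hf0 : ∀ x ∈ Icc (σ / 2) (2 * σ) ×ˢ uIcc A B, 0 < f x) :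
      ContinuousOn (fun x => f x ^ q) (Icc (σ / 2) (2 * σ) ×ˢ uIcc A B) :=
    hf.continuousOn.rpow_const fun x hx => .inl (hf0 x hx).ne'
  have hfst (x : ℝ × ℝ) (hx : x ∈ Icc (σ / 2) (2 * σ) ×ˢ uIcc A B) : 0 < x.1 := hpos _ hx.1
  have hsnd (x : ℝ × ℝ) (hx : x ∈ Icc (σ / 2) (2 * σ) ×ˢ uIcc A B) : 0 < x.2 :=
    hw.pos_of_mem (hI ▸ hx.2)
  have hgap : ContinuousOn (fun x : ℝ × ℝ => tangentGap k x.1 x.2)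
      (Icc (σ / 2) (2 * σ) ×ˢ uIcc A B) := by
    unfold tangentGap
    exact ((hrpow continuous_snd hsnd).sub (hrpow continuous_fst hfst)).sub
      (((hrpow continuous_fst hfst).const_mul k).mul (continuousOn_snd.sub continuousOn_fst))
  have hcont : ContinuousOn (fun x : ℝ × ℝ => e (X * tangentGap k x.1 x.2))
      (Icc (σ / 2) (2 * σ) ×ˢ uIcc A B) :=
    continuous_e.comp_continuousOn (hgap.const_mul X)
  have hrpow' := hrpow (q := k - 2) continuous_fst hfst
  have hwc := hw.continuous
  refine (hasDerivAt_intervalIntegral_of_continuousOn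
    (F := fun y t => (w t : ℂ) * e (X * tangentGap k y t))
    (F' := fun y t => (w t : ℂ) * (((X * (k * ((k - 1) * y ^ (k - 2)) * (y - t)) : ℝ) : ℂ) *
      (2 * π * Complex.I * e (X * tangentGap k y t)))) isCompact_Icc
    (Icc_mem_nhds (half_lt_self hσ) (lt_two_mul_self hσ)) (fun y hy => ?_) ?_
    fun y hy t _ => ?_).congr_deriv ?_
  · exact (Complex.continuous_ofReal.comp hwc).continuousOn.mul
      (hcont.comp (f := fun t => (y, t)) (by fun_prop) fun t ht => ⟨hy, ht⟩)
  · fun_prop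
  · exact (((hasDerivAt_e _).scomp y
      ((hasDerivAt_tangentGap_left t (hpos y hy)).const_mul X)).const_mul (w t : ℂ)).congr_deriv
      (by simp [Complex.real_smul])
  · rw [← intervalIntegral.integral_const_mul]
    refine intervalIntegral.integral_congr fun t _ => ?_
    push_cast
    ring

lemma IsCutoff.norm_stationaryAmplitude_sub_le (hw : IsCutoff w A B) (hk : 1 < k) {a : ℝ}
    (ha : 0 < a) (b : ℝ) : ∃ C > 0, ∀ X > 0, ∀ s ∈ Icc a b, ∀ s' ∈ Icc a b,
      ‖stationaryAmplitude w A B k X s' - stationaryAmplitude w A B k X s‖ ≤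
        C / √X * |s' - s| := by
  obtain ⟨C, hC, hmoment⟩ := hw.norm_integral_mul_sub_mul_e_le hk ha b
  obtain ⟨_, _, C', hC', hσC⟩ := exists_rpow_mem_Icc (k - 2) ha b
  have hk1 : 0 < k - 1 := sub_pos.2 hk
  refine ⟨2 * π * (k * ((k - 1) * C')) * C, by positivity, fun X hX s hs s' hs' => ?_⟩
  refine (convex_Icc a b).norm_image_sub_le_of_norm_hasDerivWithin_le (fun σ hσ =>
    (hw.hasDerivAt_stationaryAmplitude k X (ha.trans_le hσ.1)).hasDerivWithinAt)
    (fun σ hσ => ?_) hs hs'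
  have hσ0 := rpow_pos_of_pos (ha.trans_le hσ.1) (k - 2)
  rw [norm_mul, norm_neg, norm_mul, norm_mul, norm_mul, Complex.norm_I, mul_one,
    Complex.norm_ofNat, Complex.norm_of_nonneg pi_pos.le, Complex.norm_of_nonneg (by positivity)]
  calc _ ≤ 2 * π * (X * (k * ((k - 1) * C'))) * (C / (X * √X)) := by
        gcongr
        exacts [(hσC σ hσ).2, hmoment X hX σ hσ]
    _ = 2 * π * (k * ((k - 1) * C')) * C / √X := by field_simp

end StationaryPhase

end OscillatoryIntegrals

section PoissonSummation

open Set FourierTransform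

lemma summable_and_norm_tsum_sub_sum_le {ι E : Type*} [NormedAddCommGroup E] [CompleteSpace E]
    {f : ι → E} {g : ι → ℝ} {G : ℝ} (F : Finset ι) (hg : HasSum g G) (hg0 : ∀ i, 0 ≤ g i)
    (h : ∀ i ∉ F, ‖f i‖ ≤ g i) : Summable f ∧ ‖∑' i, f i - ∑ i ∈ F, f i‖ ≤ G := by
  have hf : Summable f := Summable.of_norm_bounded_eventually hg.summable <| by
    filter_upwards [F.finite_toSet.compl_mem_cofinite] with i hi using h i hi
  refine ⟨hf, ?_⟩
  rw [← hf.sum_add_tsum_compl (s := F), add_sub_cancel_left, ← hg.tsum_eq]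
  exact (tsum_of_norm_bounded (hg.summable.subtype _).hasSum fun i => h i i.2).trans
    (Summable.tsum_subtype_le g _ hg0 hg.summable)

lemma tsum_eq_tsum_fourier_of_hasCompactSupport {f : ℝ → ℂ} (hc : Continuous f)
    (hs : HasCompactSupport f) (hsum : Summable fun m : ℤ => 𝓕 f (m : ℝ)) :
    ∑' n : ℤ, f n = ∑' m : ℤ, 𝓕 f (m : ℝ) := by
  rw [hasCompactSupport_iff_eventuallyEq, Filter.coclosedCompact_eq_cocompact] at hs
  have hdecay : f =O[Filter.cocompact ℝ] fun x : ℝ => |x| ^ (-2 : ℝ) :=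
    hs.trans_isBigO (Asymptotics.isBigO_zero _ _)
  simpa using Real.tsum_eq_tsum_fourier_of_rpow_decay_of_summable hc one_lt_two hdecay hsum 0

/-- The Weyl sum `∑ w(n / N) e(x n ^ k)` smoothed by a cutoff `w` supported in `(0, B)`. -/
noncomputable def smoothWeylSum (w : ℝ → ℝ) (B k N : ℝ) : ℝ → ℂ :=
  expSum (Finset.range (⌊B * N⌋₊ + 1)) (fun n => (w (n / N) : ℂ)) (fun n => (n : ℝ) ^ k)

/-- The integral `∫ w(t) e(X t ^ k - ν t) dt` which Poisson summation attaches to the frequency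
`ν`. -/
noncomputable def dualIntegral (w : ℝ → ℝ) (A B k X ν : ℝ) : ℂ :=
  ∫ t in A..B, (w t : ℂ) * e (X * t ^ k - ν * t)

/-- The integer frequencies in Poisson summation of `e(x n ^ k)`, with `n ≈ N` and `x n ^ k ≈ t`,
whose phase may have a stationary point in `[A, B]`; here `M = t / N`. -/
noncomputable def dualFrequencies (A B k M : ℝ) : Finset ℕ :=
  Finset.Icc ⌈k * A ^ (k - 1) / 2 * M⌉₊ ⌊4 * k * B ^ (k - 1) * M⌋₊

variable {w : ℝ → ℝ} {A B k N : ℝ}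

lemma fourier_smoothWeyl_eq (hw : IsCutoff w A B) (k x : ℝ) (hN : 0 < N) (m : ℝ) :
    𝓕 (fun y : ℝ => (w (y / N) : ℂ) * e (x * y ^ k)) m =
      N * dualIntegral w A B k (x * N ^ k) (m * N) := by
  rw [Real.fourier_real_eq_integral_exp_smul]
  set g : ℝ → ℂ := fun v =>
    Complex.exp (↑(-2 * π * v * m) * Complex.I) • ((w (v / N) : ℂ) * e (x * v ^ k)) with hg
  have hscale : ∫ y, g y = N * ∫ s, g (N * s) := by
    rw [Measure.integral_comp_mul_left, abs_of_pos (inv_pos.2 hN), Complex.real_smul, ← mul_assoc,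
      ← Complex.ofReal_mul, mul_inv_cancel₀ hN.ne', Complex.ofReal_one, one_mul]
  rw [hscale, dualIntegral, intervalIntegral.integral_of_le hw.lt.le,
    ← setIntegral_eq_integral_of_forall_compl_eq_zero (s := Ioc A B)]
  · congr 1
    refine setIntegral_congr_fun measurableSet_Ioc fun s hs => ?_
    have hs0 : 0 < s := hw.pos.trans hs.1
    have hexp : Complex.exp (↑(-2 * π * (N * s) * m) * Complex.I) = e (-(m * N * s)) := by
      unfold e
      congr 1
      push_cast
      ring
    simp only [hg, smul_eq_mul]
    rw [mul_div_cancel_left₀ s hN.ne', mul_rpow hN.le hs0.le, hexp, mul_left_comm, ← e_add]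
    congr 2
    ring
  · intro s hs
    simp [hg, mul_div_cancel_left₀ s hN.ne',
      hw.eq_zero_of_notMem fun h => hs (Ioo_subset_Ioc_self h)]

lemma tsum_smoothWeyl_eq (hw : IsCutoff w A B) (k x : ℝ) (hN : 0 < N) :
    ∑' n : ℤ, (w (n / N) : ℂ) * e (x * (n : ℝ) ^ k) = smoothWeylSum w B k N x := by
  rw [tsum_eq_sum (s := (Finset.range (⌊B * N⌋₊ + 1)).map Nat.castEmbedding), Finset.sum_map]
  · simp [smoothWeylSum, expSum, mul_comm]
  · intro n hn
    rw [hw.eq_zero_of_notMem, Complex.ofReal_zero, zero_mul]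
    rintro ⟨hA, hB⟩
    have hn0 : 0 < n := by
      exact_mod_cast (div_pos_iff_of_pos_right hN).1 (hw.pos.trans hA)
    lift n to ℕ using hn0.le
    refine hn (Finset.mem_map_of_mem _ (Finset.mem_range.2 (Nat.lt_succ_of_le (Nat.le_floor ?_))))
    exact_mod_cast ((div_lt_iff₀ hN).1 hB).le

lemma smoothWeylSum_eq_tsum (hw : IsCutoff w A B) (hk : 0 ≤ k) (x : ℝ) (hN : 0 < N)
    (hs : Summable fun m : ℤ => dualIntegral w A B k (x * N ^ k) (m * N)) :
    smoothWeylSum w B k N x = N * ∑' m : ℤ, dualIntegral w A B k (x * N ^ k) (m * N) := by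
  have hcont : Continuous fun y : ℝ => (w (y / N) : ℂ) * e (x * y ^ k) := by
    have := hw.continuous
    have := continuous_rpow_const hk
    fun_prop
  have hsupp : HasCompactSupport fun y : ℝ => (w (y / N) : ℂ) * e (x * y ^ k) := by
    refine .intro (isCompact_Icc (a := A * N) (b := B * N)) fun y hy => ?_
    rw [hw.eq_zero_of_notMem, Complex.ofReal_zero, zero_mul]
    exact fun h => hy ⟨((lt_div_iff₀ hN).1 h.1).le, ((div_lt_iff₀ hN).1 h.2).le⟩
  have hpoisson := tsum_eq_tsum_fourier_of_hasCompactSupport hcont hsupp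
    (by simpa only [fourier_smoothWeyl_eq hw k x hN] using hs.mul_left (N : ℂ))
  simp only [fourier_smoothWeyl_eq hw k x hN, tsum_mul_left] at hpoisson
  rw [← tsum_smoothWeyl_eq hw k x hN, hpoisson]

lemma IsCutoff.norm_dualIntegral_le (hw : IsCutoff w A B) (hk : 1 < k) :
    ∃ C > 0, ∀ X > 0, ∀ ν : ℝ, (ν ≤ k * A ^ (k - 1) / 2 * X ∨ 2 * k * B ^ (k - 1) * X ≤ ν) →
      ‖dualIntegral w A B k X ν‖ ≤ C / (X + |ν|) ^ 2 := by
  have hA := hw.pos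
  have : 0 ≤ k - 1 := by linarith
  set a := k * A ^ (k - 1) with ha_def
  have ha : 0 < a := by positivity
  have hc1 : 1 / (2 + 2 * a) * (2 + 2 * a) = 1 := one_div_mul_cancel (by positivity)
  set c := 1 / (2 + 2 * a)
  have hc : 0 < c := by positivity
  obtain ⟨C, hC, hI⟩ := hw.norm_integral_mul_e_rpow_sub_mul_le k (mul_pos ha hc)
  refine ⟨C, hC, fun X hX ν hν => hI X hX ν fun t ht => ?_⟩
  have hat : a ≤ k * t ^ (k - 1) := by
    rw [ha_def]
    gcongr
    exact ht.1
  have htb : k * t ^ (k - 1) ≤ k * B ^ (k - 1) := by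
    have := hA.trans_le ht.1
    gcongr
    exact ht.2
  have hXa := mul_le_mul_of_nonneg_left hat hX.le
  rcases hν with hν | hν
  · refine le_trans ?_ (le_abs_self _)
    rcases abs_cases ν with ⟨h, h0⟩ | ⟨h, h0⟩ <;> rw [h]
    · nlinarith [mul_pos ha hc, mul_nonneg (mul_pos ha hc).le h0]
    · nlinarith [mul_pos ha hc, mul_pos (mul_pos ha hc) hX]
  · have hXb := mul_le_mul_of_nonneg_left htb hX.le
    have hν0 : 0 < ν := lt_of_lt_of_le (by nlinarith) hν
    rw [abs_of_pos hν0, abs_sub_comm]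
    refine le_trans ?_ (le_abs_self _)
    nlinarith

lemma mem_dualFrequencies (hk : 0 ≤ k) (hB : 0 ≤ B) {M : ℝ} (hM : 0 ≤ M) {m : ℕ} :
    m ∈ dualFrequencies A B k M ↔ k * A ^ (k - 1) / 2 * M ≤ m ∧ m ≤ 4 * k * B ^ (k - 1) * M := by
  rw [dualFrequencies, Finset.mem_Icc, Nat.ceil_le, Nat.le_floor_iff (by positivity)]

lemma IsCutoff.norm_dualIntegral_le_of_notMem (hw : IsCutoff w A B) (hk : 1 < k) :
    ∃ C > 0, ∀ N > 0, ∀ t > 0, ∀ X ∈ Icc t (2 * t),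
      ∀ m ∉ (dualFrequencies A B k (t / N)).map (Nat.castEmbedding (R := ℤ)),
        ‖dualIntegral w A B k X (m * N)‖ ≤
          (if m = 0 then C / t ^ 2 else 0) + C / N ^ 2 * (1 / (m : ℝ) ^ 2) := by
  obtain ⟨C, hC, hI⟩ := hw.norm_dualIntegral_le hk
  have hA := hw.pos
  have hB : 0 < B := hA.trans hw.lt
  have hk0 : 0 < k := by linarith
  refine ⟨C, hC, fun N hN t ht X ⟨htX, hXt⟩ m hm => ?_⟩
  have hX : 0 < X := ht.trans_le htX
  refine (hI X hX _ ?_).trans ?_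
  · by_contra! hcon
    have hm0 : 0 < m := by
      have : 0 < m * N := lt_trans (by positivity) hcon.1
      exact_mod_cast pos_of_mul_pos_left this hN.le
    lift m to ℕ using hm0.le
    refine hm (Finset.mem_map_of_mem _ ((mem_dualFrequencies hk0.le hB.le (by positivity)).2 ?_))
    rw [← mul_div_assoc, ← mul_div_assoc, div_le_iff₀ hN, le_div_iff₀ hN]
    refine ⟨le_trans ?_ hcon.1.le, hcon.2.le.trans ?_⟩
    · gcongr
    · calc 2 * k * B ^ (k - 1) * X ≤ 2 * k * B ^ (k - 1) * (2 * t) := by gcongr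
        _ = 4 * k * B ^ (k - 1) * t := by ring
  · rcases eq_or_ne m 0 with rfl | hm0
    · simp only [Int.cast_zero, zero_mul, abs_zero, add_zero, if_true]
      refine le_add_of_le_of_nonneg ?_ (by positivity)
      gcongr
    · have : 0 < |(m : ℝ) * N| := abs_pos.2 (mul_ne_zero (by exact_mod_cast hm0) hN.ne')
      calc C / (X + |(m : ℝ) * N|) ^ 2 ≤ C / |(m : ℝ) * N| ^ 2 := by gcongr; linarith
        _ = _ := by
          rw [if_neg hm0, zero_add, sq_abs]
          field_simp

lemma IsCutoff.norm_smoothWeylSum_sub_le (hw : IsCutoff w A B) (hk : 1 < k) :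
    ∃ C > 0, ∀ N > 0, ∀ t > 0, ∀ x : ℝ, x * N ^ k ∈ Icc t (2 * t) →
      ‖smoothWeylSum w B k N x -
        N * ∑ m ∈ dualFrequencies A B k (t / N), dualIntegral w A B k (x * N ^ k) (m * N)‖ ≤
          C * (N / t ^ 2 + 1 / N) := by
  obtain ⟨C, hC, hI⟩ := hw.norm_dualIntegral_le_of_notMem hk
  have hsq := summable_one_div_int_pow.2 one_lt_two
  set S := ∑' m : ℤ, 1 / (m : ℝ) ^ 2 with hS
  have hS0 : 0 ≤ S := tsum_nonneg fun m => by positivity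
  refine ⟨C * (1 + S), by positivity, fun N hN t ht x hx => ?_⟩
  obtain ⟨hsum, htail⟩ := summable_and_norm_tsum_sub_sum_le _
    ((hasSum_ite_eq 0 (C / t ^ 2)).add (hsq.hasSum.mul_left (C / N ^ 2)))
    (fun m => by split_ifs <;> positivity) (hI N hN t ht _ hx)
  rw [Finset.sum_map] at htail
  simp only [Nat.castEmbedding_apply, Int.cast_natCast, ← hS] at htail
  rw [smoothWeylSum_eq_tsum hw (by linarith) x hN hsum, ← mul_sub, norm_mul,
    Complex.norm_of_nonneg hN.le]
  calc _ ≤ N * (C / t ^ 2 + C / N ^ 2 * S) := by gcongr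
    _ = C * (N / t ^ 2 + S * (1 / N)) := by field_simp
    _ ≤ C * ((1 + S) * (N / t ^ 2 + 1 / N)) := by
        gcongr
        have : 0 ≤ S * (N / t ^ 2) := by positivity
        have : 0 ≤ 1 / N := by positivity
        linarith
    _ = _ := by ring

end PoissonSummation

section StationaryExpansion

open Set

lemma sum_Icc_mul_eq_sub_sum_Ico {R : Type*} [CommRing R] (a z : ℕ → R) {m n : ℕ} (h : m ≤ n) :
    ∑ i ∈ Finset.Icc m n, a i * z i = a n * ∑ i ∈ Finset.Icc m n, z i -
      ∑ i ∈ Finset.Ico m n, (a (i + 1) - a i) * ∑ l ∈ Finset.Icc m i, z l := by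
  induction n, h using Nat.le_induction with
  | base => simp
  | succ n hn ih =>
    rw [Finset.sum_Icc_succ_top (by lia), Finset.sum_Icc_succ_top (by lia), ih,
      Finset.sum_Ico_succ_top hn]
    ring

lemma sum_Icc_ite_eq {M : Type*} [AddCommMonoid M] (D : M) (f : ℕ → M) {m n : ℕ} (h : m ≤ n) :
    ∑ i ∈ Finset.Icc m n, (if i = n then D else f i) = D + ∑ i ∈ Finset.Ico m n, f i := by
  rw [← Finset.Ico_insert_right h, Finset.sum_insert (by simp), if_pos rfl]
  congr 1
  exact Finset.sum_congr rfl fun i hi => if_neg (Finset.mem_Ico.1 hi).2.ne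

lemma norm_sum_Icc_mul_le {R : Type*} [NormedCommRing R] {a : ℕ → R} {d : ℕ → ℝ} {D : ℝ} {m n : ℕ}
    (h : m ≤ n) (hD : ‖a n‖ ≤ D) (hd : ∀ i ∈ Finset.Ico m n, ‖a (i + 1) - a i‖ ≤ d i) (z : ℕ → R) :
    ‖∑ i ∈ Finset.Icc m n, a i * z i‖ ≤
      ∑ i ∈ Finset.Icc m n, (if i = n then D else d i) * ‖∑ l ∈ Finset.Icc m i, z l‖ := by
  have hsum := sum_Icc_ite_eq (D * ‖∑ l ∈ Finset.Icc m n, z l‖)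
    (fun i => d i * ‖∑ l ∈ Finset.Icc m i, z l‖) h
  rw [sum_Icc_mul_eq_sub_sum_Ico a z h]
  calc _ ≤ D * ‖∑ l ∈ Finset.Icc m n, z l‖ +
        ∑ i ∈ Finset.Ico m n, d i * ‖∑ l ∈ Finset.Icc m i, z l‖ := by
        refine (norm_sub_le _ _).trans (add_le_add ?_ (norm_sum_le_of_le _ fun i hi => ?_))
        · exact (norm_mul_le _ _).trans (by gcongr)
        · exact (norm_mul_le _ _).trans (by gcongr; exact hd i hi)
    _ = _ := by
        rw [← hsum]
        refine Finset.sum_congr rfl fun i _ => ?_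
        split_ifs with hi
        · rw [hi]
        · rfl

lemma natCast_rpow_le_succ {κ : ℝ} (hκ : 0 ≤ κ) (i : ℕ) : (i : ℝ) ^ κ ≤ ((i + 1 : ℕ) : ℝ) ^ κ := by
  gcongr
  simp

lemma sum_Ico_rpow_succ_sub_div_le {κ M b : ℝ} (hκ : 0 ≤ κ) (hM : 0 < M) (hb : 0 ≤ b) {m : ℕ}
    (h : m ≤ ⌊b * M⌋₊) :
    ∑ i ∈ Finset.Ico m ⌊b * M⌋₊, (((i + 1 : ℕ) : ℝ) ^ κ - (i : ℝ) ^ κ) / M ^ κ ≤ b ^ κ := by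
  rw [← Finset.sum_div, Finset.sum_Ico_sub (fun i : ℕ => (i : ℝ) ^ κ) h,
    div_le_iff₀ (rpow_pos_of_pos hM κ), ← mul_rpow hb hM.le]
  exact (sub_le_self _ (by positivity)).trans
    (rpow_le_rpow (by positivity) (Nat.floor_le (by positivity)) hκ)

/-- The critical point of the phase `X t ^ k - ν t`. -/
noncomputable def stationaryPoint (k X ν : ℝ) : ℝ := (ν / (k * X)) ^ (1 / (k - 1))

variable {w : ℝ → ℝ} {A B k X ν N : ℝ}

lemma stationaryPoint_rpow_sub_one (hk : 1 < k) (hX : 0 < X) (hν : 0 < ν) :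
    stationaryPoint k X ν ^ (k - 1) = ν / (k * X) := by
  have : 0 < k - 1 := sub_pos.2 hk
  rw [stationaryPoint, ← rpow_mul (by positivity), one_div_mul_cancel this.ne', rpow_one]

lemma dualIntegral_eq_stationaryAmplitude_mul (w : ℝ → ℝ) (A B : ℝ) (hk : 1 < k) (hX : 0 < X)
    (hν : 0 < ν) :
    dualIntegral w A B k X ν = stationaryAmplitude w A B k X (stationaryPoint k X ν) *
      e (-((k - 1) * X * stationaryPoint k X ν ^ k)) := by
  rw [dualIntegral, stationaryAmplitude, ← intervalIntegral.integral_mul_const]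
  refine intervalIntegral.integral_congr fun t _ => ?_
  have hσ : 0 < stationaryPoint k X ν := rpow_pos_of_pos (by positivity) _
  have hσk : stationaryPoint k X ν ^ k = ν / (k * X) * stationaryPoint k X ν := by
    rw [← stationaryPoint_rpow_sub_one hk hX hν, ← rpow_add_one hσ.ne', sub_add_cancel]
  simp only [tangentGap]
  rw [mul_assoc, ← e_add, stationaryPoint_rpow_sub_one hk hX hν, hσk]
  congr 2
  field_simp
  ring

/-- The coefficient of `m ^ (k / (k - 1))` in the phase of the sum dual to a sum over `n ^ k`. -/
noncomputable def dualCoeff (k : ℝ) : ℝ := -((k - 1) * k ^ (-(k / (k - 1))))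

lemma neg_mul_stationaryPoint_rpow_eq (hk : 1 < k) {x m : ℝ} (hx : 0 < x) (hN : 0 < N)
    (hm : 0 < m) :
    -((k - 1) * (x * N ^ k) * stationaryPoint k (x * N ^ k) (m * N) ^ k) =
      dualCoeff k * m ^ (k / (k - 1)) * x ^ (-(1 / (k - 1))) := by
  have hk0 : 0 < k := by linarith
  have hk1 : 0 < k - 1 := sub_pos.2 hk
  have hexp : k / (k - 1) = 1 + 1 / (k - 1) := by
    field_simp
    ring
  have hNk : N ^ (k * (k / (k - 1))) = N ^ k * N ^ (k / (k - 1)) := by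
    rw [← rpow_add hN]
    congr 1
    field_simp
    ring
  have hxk : x ^ (k / (k - 1)) = x * x ^ (1 / (k - 1)) := by
    rw [hexp, rpow_add hx, rpow_one]
  rw [stationaryPoint, ← rpow_mul (by positivity), one_div_mul_eq_div,
    div_rpow (by positivity) (by positivity), mul_rpow hm.le hN.le,
    mul_rpow hk0.le (by positivity), mul_rpow hx.le (by positivity), ← rpow_mul hN.le, hNk, hxk,
    dualCoeff, rpow_neg hk0.le, rpow_neg hx.le]
  field_simp

/-- The partial sum `∑_{m₁ ≤ m ≤ j} e(c_k m ^ (k / (k - 1)) y)` of the dual sum. -/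
noncomputable def dualSum (k : ℝ) (m₁ j : ℕ) : ℝ → ℂ :=
  expSum (Finset.Icc m₁ j) (fun _ => 1) fun m => dualCoeff k * (m : ℝ) ^ (k / (k - 1))

lemma stationaryPoint_mem_Icc (hk : 1 < k) (hA : 0 < A) (hB : 0 < B) (hN : 0 < N) {t : ℝ}
    (ht : 0 < t) (hX : X ∈ Icc t (2 * t)) {m : ℕ} (hm : m ∈ dualFrequencies A B k (t / N)) :
    stationaryPoint k X (m * N) ∈
      Icc ((A ^ (k - 1) / 4) ^ (1 / (k - 1))) ((4 * B ^ (k - 1)) ^ (1 / (k - 1))) := by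
  have hk0 : 0 < k := by linarith
  have hκ : 0 ≤ 1 / (k - 1) := one_div_nonneg.2 (by linarith)
  have hX0 : 0 < X := ht.trans_le hX.1
  rw [mem_dualFrequencies hk0.le hB.le (by positivity), ← mul_div_assoc, ← mul_div_assoc,
    div_le_iff₀ hN, le_div_iff₀ hN] at hm
  refine ⟨rpow_le_rpow (by positivity) ?_ hκ, rpow_le_rpow (by positivity) ?_ hκ⟩
  · rw [le_div_iff₀ (by positivity)]
    calc A ^ (k - 1) / 4 * (k * X) ≤ A ^ (k - 1) / 4 * (k * (2 * t)) := by gcongr; exact hX.2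
      _ = k * A ^ (k - 1) / 2 * t := by ring
      _ ≤ m * N := hm.1
  · rw [div_le_iff₀ (by positivity)]
    calc m * N ≤ 4 * k * B ^ (k - 1) * t := hm.2
      _ ≤ 4 * k * B ^ (k - 1) * X := by gcongr; exact hX.1
      _ = _ := by ring

lemma IsCutoff.norm_stationaryAmplitude_succ_sub_le (hw : IsCutoff w A B) (hk : 1 < k) :
    ∃ C > 0, ∀ N > 0, ∀ t > 0, ∀ X ∈ Icc t (2 * t), ∀ i : ℕ,
      i ∈ dualFrequencies A B k (t / N) → i + 1 ∈ dualFrequencies A B k (t / N) →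
      ‖stationaryAmplitude w A B k X (stationaryPoint k X ((i + 1 : ℕ) * N)) -
        stationaryAmplitude w A B k X (stationaryPoint k X (i * N))‖ ≤
          C / √t * ((((i + 1 : ℕ) : ℝ) ^ (1 / (k - 1)) - (i : ℝ) ^ (1 / (k - 1))) /
            (t / N) ^ (1 / (k - 1))) := by
  have hA := hw.pos
  have hB : 0 < B := hA.trans hw.lt
  have hκ : 0 ≤ 1 / (k - 1) := one_div_nonneg.2 (by linarith)
  obtain ⟨C, hC, hlip⟩ := hw.norm_stationaryAmplitude_sub_le hk
    (a := (A ^ (k - 1) / 4) ^ (1 / (k - 1))) (by positivity) ((4 * B ^ (k - 1)) ^ (1 / (k - 1)))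
  refine ⟨C, hC, fun N hN t ht X hX i hi hi' => ?_⟩
  have hX0 : 0 < X := ht.trans_le hX.1
  have hσ (j : ℕ) : stationaryPoint k X (j * N) =
      (j : ℝ) ^ (1 / (k - 1)) / (k * X / N) ^ (1 / (k - 1)) := by
    rw [stationaryPoint, ← div_rpow (by positivity) (by positivity), div_div_eq_mul_div]
  have hmono := sub_nonneg.2 (natCast_rpow_le_succ hκ i)
  refine (hlip X hX0 _ (stationaryPoint_mem_Icc hk hA hB hN ht hX hi) _
    (stationaryPoint_mem_Icc hk hA hB hN ht hX hi')).trans ?_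
  have hle : t ≤ k * X := hX.1.trans (le_mul_of_one_le_left hX0.le hk.le)
  rw [hσ, hσ, ← sub_div, abs_of_nonneg (by positivity)]
  gcongr
  exact hX.1

lemma IsCutoff.norm_sum_dualIntegral_le (hw : IsCutoff w A B) (hk : 1 < k) :
    ∃ C > 0, ∀ N > 0, ∀ t > 0, ∃ d : ℕ → ℝ, (∀ j, 0 ≤ d j) ∧
      ∑ j ∈ dualFrequencies A B k (t / N), d j ≤ C / √t ∧
      ∀ x > 0, x * N ^ k ∈ Icc t (2 * t) →
        ‖∑ m ∈ dualFrequencies A B k (t / N), dualIntegral w A B k (x * N ^ k) (m * N)‖ ≤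
          ∑ j ∈ dualFrequencies A B k (t / N),
            d j * ‖dualSum k ⌈k * A ^ (k - 1) / 2 * (t / N)⌉₊ j (x ^ (-(1 / (k - 1))))‖ := by
  have hA := hw.pos
  have hB : 0 < B := hA.trans hw.lt
  have : 0 < k := by linarith
  have hκ : 0 ≤ 1 / (k - 1) := one_div_nonneg.2 (by linarith)
  obtain ⟨C₁, hC₁, hsup⟩ := hw.norm_stationaryAmplitude_le hk
  obtain ⟨C₂, hC₂, hvar⟩ := hw.norm_stationaryAmplitude_succ_sub_le hk
  refine ⟨C₁ + C₂ * (4 * k * B ^ (k - 1)) ^ (1 / (k - 1)), by positivity, fun N hN t ht => ?_⟩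
  have hvar := hvar N hN t ht
  simp only [dualFrequencies, Finset.mem_Icc] at hvar ⊢
  set m₁ := ⌈k * A ^ (k - 1) / 2 * (t / N)⌉₊
  set m₂ := ⌊4 * k * B ^ (k - 1) * (t / N)⌋₊
  rcases lt_or_ge m₂ m₁ with hlt | hle
  · rw [Finset.Icc_eq_empty_of_lt hlt]
    exact ⟨0, fun _ => le_rfl, by rw [Finset.sum_empty]; positivity, by simp⟩
  set d : ℕ → ℝ := fun i => C₂ / √t *
    ((((i + 1 : ℕ) : ℝ) ^ (1 / (k - 1)) - (i : ℝ) ^ (1 / (k - 1))) / (t / N) ^ (1 / (k - 1)))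
  refine ⟨fun i => if i = m₂ then C₁ / √t else d i, fun j => ?_, ?_, fun x hx hX => ?_⟩
  · have := sub_nonneg.2 (natCast_rpow_le_succ hκ j)
    dsimp only [d]
    split_ifs <;> positivity
  · rw [sum_Icc_ite_eq _ _ hle, ← Finset.mul_sum]
    calc _ ≤ C₁ / √t + C₂ / √t * (4 * k * B ^ (k - 1)) ^ (1 / (k - 1)) := by
          gcongr
          exact sum_Ico_rpow_succ_sub_div_le hκ (by positivity) (by positivity) hle
      _ = _ := by ring
  · have hX0 : 0 < x * N ^ k := ht.trans_le hX.1
    have hm₁ : 0 < m₁ := Nat.ceil_pos.2 (by positivity)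
    calc _ = ‖∑ m ∈ Finset.Icc m₁ m₂,
          stationaryAmplitude w A B k (x * N ^ k) (stationaryPoint k (x * N ^ k) (m * N)) *
            (1 * e (dualCoeff k * (m : ℝ) ^ (k / (k - 1)) * x ^ (-(1 / (k - 1)))))‖ := by
          congr 1
          refine Finset.sum_congr rfl fun m hm => ?_
          have hm0 : (0 : ℝ) < m := by exact_mod_cast hm₁.trans_le (Finset.mem_Icc.1 hm).1
          rw [dualIntegral_eq_stationaryAmplitude_mul w A B hk hX0 (by positivity),
            neg_mul_stationaryPoint_rpow_eq hk hx hN hm0, one_mul]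
      _ ≤ _ := norm_sum_Icc_mul_le hle ((hsup _ hX0 _).trans (by gcongr; exact hX.1))
          (fun i hi => hvar _ hX i (by grind) (by grind)) _

end StationaryExpansion

section FourthMoments

open Set

/-- The Robert–Sargos counting theorem with exponent loss `γ`: for every `k > 1`, the integers
`n ≈ N` have `≪ Δ N ^ (4 - k) + N ^ (2 + γ)` quadruples with
`|n₁ ^ k + n₂ ^ k - n₃ ^ k - n₄ ^ k| ≤ Δ`. It is quantified over all `k` because van der Corput's
process B exchanges `k` with the dual exponent `k / (k - 1)`. -/
def CountingBound (γ : ℝ) : Prop :=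
  ∀ k > (1 : ℝ), ∀ a > (0 : ℝ), ∀ b : ℝ, ∃ C > 0, ∀ N > (0 : ℝ), ∀ Δ > (0 : ℝ), ∀ S : Finset ℕ,
    (∀ n ∈ S, (n : ℝ) ∈ Icc (a * N) (b * N)) →
      (energy S (fun n => (n : ℝ) ^ k) Δ : ℝ) ≤ C * (Δ * N ^ (4 - k) + N ^ (2 + γ))

variable {w : ℝ → ℝ} {A B k γ : ℝ}

lemma integral_comp_rpow_neg_le {f : ℝ → ℝ} (hf : Continuous f) (hf0 : ∀ x, 0 ≤ f x) {V κ : ℝ}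
    (hV : 0 < V) (hκ : 0 < κ) :
    ∫ x in V..(2 * V), f (x ^ (-κ)) ≤
      2 ^ (κ + 1) / κ * V ^ (κ + 1) * ∫ y in (0 : ℝ)..(V ^ (-κ)), f y := by
  have hle : V ≤ 2 * V := by linarith
  have hpos : ∀ x ∈ uIcc V (2 * V), 0 < x := fun x hx =>
    hV.trans_le (by rw [uIcc_of_le hle] at hx; exact hx.1)
  have hcont : ∀ s : ℝ, ContinuousOn (fun x : ℝ => x ^ s) (uIcc V (2 * V)) := fun s x hx =>
    (continuousAt_rpow_const x s (.inl (hpos x hx).ne')).continuousWithinAt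
  have hsubst : ∫ x in V..(2 * V), f (x ^ (-κ)) * (κ * x ^ (-κ - 1)) =
      ∫ y in ((2 * V) ^ (-κ))..(V ^ (-κ)), f y := by
    rw [intervalIntegral.integral_symm (V ^ (-κ)), ← intervalIntegral.integral_comp_mul_deriv
      (fun x hx => hasDerivAt_rpow_const (.inl (hpos x hx).ne')) ((hcont _).const_smul (-κ)) hf,
      ← intervalIntegral.integral_neg]
    simp only [Function.comp_apply, neg_mul, mul_neg, neg_neg]
  have hweight : ∀ x ∈ Icc V (2 * V), 1 ≤ (2 * V) ^ (κ + 1) / κ * (κ * x ^ (-κ - 1)) := by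
    intro x hx
    have hx0 := hV.trans_le hx.1
    rw [div_mul_eq_mul_div, mul_left_comm, mul_div_cancel_left₀ _ hκ.ne',
      show -κ - 1 = -(κ + 1) by ring, rpow_neg hx0.le, ← div_eq_mul_inv,
      one_le_div (by positivity)]
    gcongr
    exact hx.2
  calc ∫ x in V..(2 * V), f (x ^ (-κ))
      ≤ ∫ x in V..(2 * V), (2 * V) ^ (κ + 1) / κ * (f (x ^ (-κ)) * (κ * x ^ (-κ - 1))) := by
        refine intervalIntegral.integral_mono_on hle
          (hf.comp_continuousOn (hcont _)).intervalIntegrable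
          (((hf.comp_continuousOn (hcont _)).mul
            ((hcont _).const_mul _)).const_mul _).intervalIntegrable fun x hx => ?_
        rw [mul_left_comm]
        exact le_mul_of_one_le_right (hf0 _) (hweight x hx)
    _ = 2 ^ (κ + 1) / κ * V ^ (κ + 1) * ∫ y in ((2 * V) ^ (-κ))..(V ^ (-κ)), f y := by
        rw [intervalIntegral.integral_const_mul, hsubst, mul_rpow two_pos.le hV.le,
          mul_div_right_comm]
    _ ≤ _ := by
        refine mul_le_mul_of_nonneg_left (intervalIntegral.integral_mono_interval
          (by positivity) ?_ le_rfl (.of_forall hf0) (hf.intervalIntegrable _ _)) (by positivity)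
        exact rpow_le_rpow_of_nonpos hV hle (neg_nonpos.2 hκ.le)

lemma rpow_mul_rpow_dual {N t : ℝ} (hk : 1 < k) (hN : 0 < N) (ht : 0 < t) :
    (t / N ^ k) ^ (1 / (k - 1)) * (t / N) ^ (4 - k / (k - 1)) = (t / N) ^ 4 / t := by
  have hk1 : k - 1 ≠ 0 := by linarith
  set κ := 1 / (k - 1) with hκ
  have hdual : k / (k - 1) = 1 + κ := by rw [hκ]; field_simp; ring
  have hkκ : k * κ = 1 + κ := by rw [← hdual, hκ]; ring
  rw [hdual, rpow_sub (by positivity), div_rpow ht.le (by positivity), ← rpow_mul hN.le, hkκ,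
    div_rpow ht.le hN.le (1 + κ), rpow_add ht, rpow_one, rpow_ofNat]
  field_simp

lemma CountingBound.energy_dual_le (hγ : CountingBound γ) (hk : 1 < k) (hA : 0 < A) (hB : 0 ≤ B) :
    ∃ C > 0, ∀ N > 0, ∀ t > 0, ∀ j ∈ dualFrequencies A B k (t / N),
      (energy (Finset.Icc ⌈k * A ^ (k - 1) / 2 * (t / N)⌉₊ j)
        (fun m => dualCoeff k * (m : ℝ) ^ (k / (k - 1)))
        (1 / (2 * (t / N ^ k) ^ (-(1 / (k - 1))))) : ℝ) ≤
          C * ((t / N) ^ 4 / t + (t / N) ^ (2 + γ)) := by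
  have hk0 : 0 < k := by linarith
  have hk1 : 0 < k - 1 := by linarith
  have hc : dualCoeff k ≠ 0 := neg_ne_zero.2 (by positivity)
  have := abs_pos.2 hc
  obtain ⟨C, hC, hcount⟩ := hγ (k / (k - 1)) ((one_lt_div hk1).2 (by linarith))
    (k * A ^ (k - 1) / 2) (by positivity) (4 * k * B ^ (k - 1))
  refine ⟨C * (1 / (2 * |dualCoeff k|) + 1), by positivity, fun N hN t ht j hj => ?_⟩
  have hM : 0 < t / N := by positivity
  have hmem : ∀ m ∈ Finset.Icc ⌈k * A ^ (k - 1) / 2 * (t / N)⌉₊ j, (m : ℝ) ∈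
      Icc (k * A ^ (k - 1) / 2 * (t / N)) (4 * k * B ^ (k - 1) * (t / N)) := fun m hm =>
    (mem_dualFrequencies hk0.le hB hM.le).1 (Finset.mem_Icc.2
      ⟨(Finset.mem_Icc.1 hm).1, (Finset.mem_Icc.1 hm).2.trans (Finset.mem_Icc.1 hj).2⟩)
  have hmain : 1 / (2 * (t / N ^ k) ^ (-(1 / (k - 1)))) / |dualCoeff k| *
      (t / N) ^ (4 - k / (k - 1)) = 1 / (2 * |dualCoeff k|) * ((t / N) ^ 4 / t) := by
    rw [← rpow_mul_rpow_dual hk hN ht, rpow_neg (by positivity)]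
    field_simp
  rw [energy_const_mul _ _ hc]
  refine (hcount _ hM _ (by positivity) _ hmem).trans ?_
  rw [hmain, mul_assoc C]
  have h₁ : 0 ≤ (t / N) ^ 4 / t := by positivity
  have h₂ : 0 ≤ 1 / (2 * |dualCoeff k|) * (t / N) ^ (2 + γ) := by positivity
  gcongr
  linarith

lemma CountingBound.integral_norm_dualSum_pow_four_le (hγ : CountingBound γ) (hk : 1 < k)
    (hA : 0 < A) (hB : 0 ≤ B) :
    ∃ C > 0, ∀ N > 0, ∀ t > 0, ∀ j ∈ dualFrequencies A B k (t / N),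
      ∫ x in (t / N ^ k)..(2 * (t / N ^ k)),
        ‖dualSum k ⌈k * A ^ (k - 1) / 2 * (t / N)⌉₊ j (x ^ (-(1 / (k - 1))))‖ ^ 4 ≤
          C * (t / N ^ k) * ((t / N) ^ 4 / t + (t / N) ^ (2 + γ)) := by
  obtain ⟨C, hC, henergy⟩ := hγ.energy_dual_le hk hA hB
  set κ := 1 / (k - 1)
  have hκ : 0 < κ := one_div_pos.2 (sub_pos.2 hk)
  refine ⟨2 ^ (κ + 1) / κ * (π ^ 2 / 2) * C, by positivity, fun N hN t ht j hj => ?_⟩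
  set V := t / N ^ k
  have hV : 0 < V := by positivity
  set m₁ := ⌈k * A ^ (k - 1) / 2 * (t / N)⌉₊
  calc _ ≤ 2 ^ (κ + 1) / κ * V ^ (κ + 1) *
        ∫ y in (0 : ℝ)..(V ^ (-κ)), ‖dualSum k m₁ j y‖ ^ 4 :=
        integral_comp_rpow_neg_le (f := fun y => ‖dualSum k m₁ j y‖ ^ 4)
          (by unfold dualSum; fun_prop) (fun y => by positivity) hV hκ
    _ ≤ 2 ^ (κ + 1) / κ * V ^ (κ + 1) * (π ^ 2 / 2 * V ^ (-κ) * 1 ^ 4 *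
          (C * ((t / N) ^ 4 / t + (t / N) ^ (2 + γ)))) := by
        gcongr
        refine (integral_norm_pow_four_le_energy (fun _ _ => norm_one.le) _
          (by positivity)).trans ?_
        gcongr
        exact henergy N hN t ht j hj
    _ = _ := by
        rw [rpow_add hV, rpow_neg hV.le, rpow_one]
        field_simp

lemma sum_mul_pow_four_le (s : Finset ℕ) {d f : ℕ → ℝ} (hd : ∀ j, 0 ≤ d j) :
    (∑ j ∈ s, d j * f j) ^ 4 ≤ (∑ j ∈ s, d j) ^ 3 * ∑ j ∈ s, d j * f j ^ 4 := by
  have hcs : ∀ g : ℕ → ℝ, (∑ j ∈ s, d j * g j) ^ 2 ≤ (∑ j ∈ s, d j) * ∑ j ∈ s, d j * g j ^ 2 :=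
    fun g => Finset.sum_sq_le_sum_mul_sum_of_sq_le_mul s (fun j _ => hd j)
      (fun j _ => mul_nonneg (hd j) (sq_nonneg _)) (fun j _ => (by ring : _ = _).le)
  have : 0 ≤ ∑ j ∈ s, d j := Finset.sum_nonneg fun j _ => hd j
  calc (∑ j ∈ s, d j * f j) ^ 4 = ((∑ j ∈ s, d j * f j) ^ 2) ^ 2 := by ring
    _ ≤ ((∑ j ∈ s, d j) * ∑ j ∈ s, d j * f j ^ 2) ^ 2 := by gcongr; exact hcs f
    _ = (∑ j ∈ s, d j) ^ 2 * (∑ j ∈ s, d j * f j ^ 2) ^ 2 := by ring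
    _ ≤ (∑ j ∈ s, d j) ^ 2 * ((∑ j ∈ s, d j) * ∑ j ∈ s, d j * (f j ^ 2) ^ 2) := by
        gcongr; exact hcs _
    _ = _ := by simp only [← pow_mul]; ring

lemma integral_sum_mul_pow_four_le (s : Finset ℕ) {d : ℕ → ℝ} {f : ℕ → ℝ → ℝ} {a b K : ℝ}
    (hab : a ≤ b) (hd : ∀ j, 0 ≤ d j) (hf : ∀ j, ContinuousOn (f j) (Icc a b))
    (hK : ∀ j ∈ s, ∫ x in a..b, f j x ^ 4 ≤ K) :
    ∫ x in a..b, (∑ j ∈ s, d j * f j x) ^ 4 ≤ (∑ j ∈ s, d j) ^ 4 * K := by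
  have hpow : ∀ j, ContinuousOn (fun x => d j * f j x ^ 4) (Icc a b) := fun j =>
    ((hf j).pow 4).const_mul (d j)
  have hsum : ContinuousOn (fun x => ∑ j ∈ s, d j * f j x) (Icc a b) :=
    continuousOn_finsetSum s fun j _ => (hf j).const_mul (d j)
  calc ∫ x in a..b, (∑ j ∈ s, d j * f j x) ^ 4
      ≤ ∫ x in a..b, (∑ j ∈ s, d j) ^ 3 * ∑ j ∈ s, d j * f j x ^ 4 :=
        intervalIntegral.integral_mono_on hab ((hsum.pow 4).intervalIntegrable_of_Icc hab)
          (((continuousOn_finsetSum s fun j _ => hpow j).const_mul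
            _).intervalIntegrable_of_Icc hab) fun x _ => sum_mul_pow_four_le s hd
    _ = (∑ j ∈ s, d j) ^ 3 * ∑ j ∈ s, d j * ∫ x in a..b, f j x ^ 4 := by
        rw [intervalIntegral.integral_const_mul,
          intervalIntegral.integral_finsetSum fun j _ =>
            (hpow j).intervalIntegrable_of_Icc hab]
        simp only [intervalIntegral.integral_const_mul]
    _ ≤ (∑ j ∈ s, d j) ^ 3 * ∑ j ∈ s, d j * K := by
        have : 0 ≤ ∑ j ∈ s, d j := Finset.sum_nonneg fun j _ => hd j
        gcongr with j hj
        · exact hd j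
        · exact hK j hj
    _ = _ := by rw [← Finset.sum_mul]; ring

lemma integral_pow_four_le_of_le_sum_mul_add (s : Finset ℕ) {d : ℕ → ℝ} {f : ℕ → ℝ → ℝ}
    {g : ℝ → ℝ} {a b E K : ℝ} (hab : a ≤ b) (hd : ∀ j, 0 ≤ d j)
    (hf : ∀ j, ContinuousOn (f j) (Icc a b)) (hf0 : ∀ j x, 0 ≤ f j x)
    (hg : ContinuousOn g (Icc a b)) (hg0 : ∀ x, 0 ≤ g x) (hE : 0 ≤ E)
    (hle : ∀ x ∈ Icc a b, g x ≤ ∑ j ∈ s, d j * f j x + E)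
    (hK : ∀ j ∈ s, ∫ x in a..b, f j x ^ 4 ≤ K) :
    ∫ x in a..b, g x ^ 4 ≤ 8 * ((∑ j ∈ s, d j) ^ 4 * K + (b - a) * E ^ 4) := by
  have hsum : IntervalIntegrable (fun x => (∑ j ∈ s, d j * f j x) ^ 4) volume a b :=
    ((continuousOn_finsetSum s fun j _ =>
      (hf j).const_mul (d j)).pow 4).intervalIntegrable_of_Icc hab
  calc ∫ x in a..b, g x ^ 4 ≤ ∫ x in a..b, 8 * ((∑ j ∈ s, d j * f j x) ^ 4 + E ^ 4) := by
        refine intervalIntegral.integral_mono_on hab ((hg.pow 4).intervalIntegrable_of_Icc hab)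
          ((hsum.add intervalIntegrable_const).const_mul 8) fun x hx => ?_
        refine (pow_le_pow_left₀ (hg0 x) (hle x hx) 4).trans ((add_pow_le
          (Finset.sum_nonneg fun j _ => mul_nonneg (hd j) (hf0 j x)) hE 4).trans_eq ?_)
        norm_num
    _ = 8 * ((∫ x in a..b, (∑ j ∈ s, d j * f j x) ^ 4) + (b - a) * E ^ 4) := by
        rw [intervalIntegral.integral_const_mul,
          intervalIntegral.integral_add hsum intervalIntegrable_const,
          intervalIntegral.integral_const, smul_eq_mul]
    _ ≤ _ := by
        gcongr
        exact integral_sum_mul_pow_four_le s hab hd hf hK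

/-- Van der Corput's process B for the smoothed Weyl sum. The majorant involves only partial sums of
the dual Weyl sum, with weights `d` that do not depend on `x`, so that it can be integrated against
fourth moments. -/
lemma IsCutoff.norm_smoothWeylSum_le (hw : IsCutoff w A B) (hk : 1 < k) :
    ∃ C > 0, ∀ N ≥ (1 : ℝ), ∀ t ≥ (1 / 2 : ℝ), ∃ d : ℕ → ℝ, (∀ j, 0 ≤ d j) ∧
      ∑ j ∈ dualFrequencies A B k (t / N), d j ≤ C * (N / √t) ∧
      ∀ x > 0, x * N ^ k ∈ Icc t (2 * t) →
        ‖smoothWeylSum w B k N x‖ ≤ ∑ j ∈ dualFrequencies A B k (t / N), d j *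
            ‖dualSum k ⌈k * A ^ (k - 1) / 2 * (t / N)⌉₊ j (x ^ (-(1 / (k - 1))))‖ +
          C * (N / √t + 1) := by
  obtain ⟨C₁, hC₁, hpoisson⟩ := hw.norm_smoothWeylSum_sub_le hk
  obtain ⟨C₂, hC₂, hstationary⟩ := hw.norm_sum_dualIntegral_le hk
  refine ⟨8 * C₁ + C₂, by positivity, fun N hN1 t ht2 => ?_⟩
  have hN : 0 < N := by linarith
  have ht : 0 < t := by linarith
  have : 0 < √t := sqrt_pos.2 ht
  obtain ⟨d, hd, hdsum, hdual⟩ := hstationary N hN t ht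
  refine ⟨fun j => N * d j, fun j => mul_nonneg hN.le (hd j), ?_, fun x hx hxt => ?_⟩
  · rw [← Finset.mul_sum]
    calc _ ≤ N * (C₂ / √t) := by gcongr
      _ = C₂ * (N / √t) := by ring
      _ ≤ _ := by gcongr; linarith
  have herr : C₁ * (N / t ^ 2 + 1 / N) ≤ (8 * C₁ + C₂) * (N / √t + 1) := by
    have hcube : 1 ≤ (2 * √t) ^ 3 :=
      one_le_pow₀ (by linarith [le_sqrt_of_sq_le (show (1 / 2 : ℝ) ^ 2 ≤ t by linarith)])
    have h₁ : N / t ^ 2 ≤ 8 * (N / √t) := by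
      calc N / t ^ 2 ≤ N / t ^ 2 * (2 * √t) ^ 3 := le_mul_of_one_le_right (by positivity) hcube
        _ = 8 * (N / √t) * ((√t ^ 2) ^ 2 / t ^ 2) := by field_simp; norm_num
        _ = 8 * (N / √t) := by rw [sq_sqrt ht.le, div_self (by positivity), mul_one]
    have h₂ : 1 / N ≤ 1 := (div_le_one hN).2 hN1
    calc C₁ * (N / t ^ 2 + 1 / N) ≤ C₁ * (8 * (N / √t) + 8) := by gcongr; linarith
      _ = 8 * C₁ * (N / √t + 1) := by ring
      _ ≤ _ := by gcongr; linarith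
  set Z := ∑ m ∈ dualFrequencies A B k (t / N), dualIntegral w A B k (x * N ^ k) (m * N)
  calc ‖smoothWeylSum w B k N x‖ ≤ ‖(N : ℂ) * Z‖ + ‖smoothWeylSum w B k N x - N * Z‖ := by
        simpa using norm_add_le ((N : ℂ) * Z) (smoothWeylSum w B k N x - N * Z)
    _ ≤ _ := by
        rw [norm_mul, Complex.norm_of_nonneg hN.le]
        simp only [mul_assoc N, ← Finset.mul_sum]
        exact add_le_add (mul_le_mul_of_nonneg_left (hdual x hx hxt) hN.le)
          ((hpoisson N hN t ht x hxt).trans herr)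

lemma processB_moment_le {C₁ C₂ D V N t : ℝ} (hC₂ : 0 ≤ C₂) (hV : 0 ≤ V)
    (hN : 0 < N) (ht : 1 / 2 ≤ t) (hD0 : 0 ≤ D) (hD : D ≤ C₁ * (N / √t)) :
    8 * (D ^ 4 * (C₂ * V * ((t / N) ^ 4 / t + (t / N) ^ (2 + γ))) +
        V * (C₁ * (N / √t + 1)) ^ 4) ≤
      8 * C₁ ^ 4 * (C₂ + 16) * V * (N ^ 4 / t ^ 2 + t + N ^ (2 - γ) * t ^ γ) := by
  have ht0 : 0 < t := one_half_pos.trans_le ht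
  have hs4 : (N / √t) ^ 4 = N ^ 4 / t ^ 2 := by
    rw [div_pow, show √t ^ 4 = (√t ^ 2) ^ 2 by ring, sq_sqrt ht0.le]
  have hpole : 0 ≤ N ^ 4 / t ^ 2 := by positivity
  have hloss : 0 ≤ N ^ (2 - γ) * t ^ γ := by positivity
  have hE4 : (N / √t + 1) ^ 4 ≤ 16 * (N ^ 4 / t ^ 2 + t + N ^ (2 - γ) * t ^ γ) := by
    have := add_pow_le (show 0 ≤ N / √t by positivity) zero_le_one 4
    rw [hs4] at this
    norm_num at this
    linarith
  have hdual : N ^ 4 / t ^ 2 * ((t / N) ^ 4 / t + (t / N) ^ (2 + γ)) =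
      t + N ^ (2 - γ) * t ^ γ := by
    rw [div_rpow ht0.le hN.le, rpow_add ht0, rpow_add hN, rpow_sub hN, rpow_two, rpow_two]
    field_simp
  calc _ ≤ 8 * ((C₁ * (N / √t)) ^ 4 * (C₂ * V * ((t / N) ^ 4 / t + (t / N) ^ (2 + γ))) +
          V * (C₁ * (N / √t + 1)) ^ 4) := by gcongr
    _ = 8 * C₁ ^ 4 * V * (C₂ * (t + N ^ (2 - γ) * t ^ γ) + (N / √t + 1) ^ 4) := by
        rw [← hdual, ← hs4]
        ring
    _ ≤ 8 * C₁ ^ 4 * V * (C₂ * (N ^ 4 / t ^ 2 + t + N ^ (2 - γ) * t ^ γ) +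
          16 * (N ^ 4 / t ^ 2 + t + N ^ (2 - γ) * t ^ γ)) := by
        gcongr
        linarith
    _ = _ := by ring

lemma CountingBound.integral_norm_smoothWeylSum_pow_four_dyadic_le (hγ : CountingBound γ)
    (hw : IsCutoff w A B) (hk : 1 < k) :
    ∃ C > 0, ∀ N ≥ (1 : ℝ), ∀ t ≥ (1 / 2 : ℝ),
      ∫ x in (t / N ^ k)..(2 * (t / N ^ k)), ‖smoothWeylSum w B k N x‖ ^ 4 ≤
        C * (t / N ^ k) * (N ^ 4 / t ^ 2 + t + N ^ (2 - γ) * t ^ γ) := by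
  obtain ⟨C₁, hC₁, hprocessB⟩ := hw.norm_smoothWeylSum_le hk
  obtain ⟨C₂, hC₂, hmoment⟩ := hγ.integral_norm_dualSum_pow_four_le hk hw.pos
    (hw.pos.trans hw.lt).le
  refine ⟨8 * C₁ ^ 4 * (C₂ + 16), by positivity, fun N hN1 t ht2 => ?_⟩
  have hN : 0 < N := by linarith
  have ht : 0 < t := by linarith
  obtain ⟨d, hd, hdsum, hpointwise⟩ := hprocessB N hN1 t ht2
  set V := t / N ^ k
  have hV : 0 < V := by positivity
  have hV2 : V ≤ 2 * V := by linarith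
  set F := dualFrequencies A B k (t / N)
  set f : ℕ → ℝ → ℝ := fun j x =>
    ‖dualSum k ⌈k * A ^ (k - 1) / 2 * (t / N)⌉₊ j (x ^ (-(1 / (k - 1))))‖
  have hf : ∀ j, ContinuousOn (f j) (Icc V (2 * V)) := fun j =>
    ((continuous_expSum _ _ _).comp_continuousOn fun x hx => (continuousAt_rpow_const x _
      (.inl (hV.trans_le hx.1).ne')).continuousWithinAt).norm
  have hle : ∀ x ∈ Icc V (2 * V), ‖smoothWeylSum w B k N x‖ ≤
      ∑ j ∈ F, d j * f j x + C₁ * (N / √t + 1) := fun x hx =>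
    have hNk : 0 < N ^ k := by positivity
    hpointwise x (hV.trans_le hx.1)
      ⟨(div_le_iff₀ hNk).1 hx.1, (le_div_iff₀ hNk).1 (hx.2.trans_eq (by ring))⟩
  refine (integral_pow_four_le_of_le_sum_mul_add F hV2 hd hf (fun _ _ => norm_nonneg _)
    (continuous_expSum _ _ _).norm.continuousOn (fun _ => norm_nonneg _) (by positivity) hle
    (hmoment N hN t ht)).trans ?_
  rw [show 2 * V - V = V by ring]
  exact processB_moment_le hC₂.le hV.le hN ht2 (Finset.sum_nonneg fun j _ => hd j) hdsum

lemma IsCutoff.norm_smoothWeylSum_le_mul (hw : IsCutoff w A B) (k : ℝ) :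
    ∃ C > 0, ∀ N ≥ (1 : ℝ), ∀ x, ‖smoothWeylSum w B k N x‖ ≤ C * N := by
  obtain ⟨W, hW, hwW⟩ := hw.exists_bound
  have hB : 0 < B := hw.pos.trans hw.lt
  have habs : ∀ t, |w t| ≤ W := fun t => by
    by_cases ht : t ∈ Ioo A B
    · exact (hwW t (Ioo_subset_Icc_self ht)).1
    · rw [hw.eq_zero_of_notMem ht, abs_zero]
      exact hW.le
  refine ⟨W * (B + 1), by positivity, fun N hN x => (norm_expSum_le_sum _ _ _ _).trans ?_⟩
  calc ∑ n ∈ Finset.range (⌊B * N⌋₊ + 1), ‖(w (n / N) : ℂ)‖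
      ≤ ∑ _n ∈ Finset.range (⌊B * N⌋₊ + 1), W := by
        refine Finset.sum_le_sum fun n _ => ?_
        rw [Complex.norm_real, norm_eq_abs]
        exact habs _
    _ = (⌊B * N⌋₊ + 1) * W := by simp
    _ ≤ (B * N + N) * W := by
        gcongr
        exact Nat.floor_le (by positivity)
    _ = _ := by ring

lemma IsCutoff.integral_norm_smoothWeylSum_pow_four_le_mul (hw : IsCutoff w A B) (k : ℝ) :
    ∃ C > 0, ∀ N ≥ (1 : ℝ), ∀ T ≥ (0 : ℝ),
      ∫ x in (0 : ℝ)..(T / N ^ k), ‖smoothWeylSum w B k N x‖ ^ 4 ≤ C / N ^ k * (N ^ 4 * T) := by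
  obtain ⟨C, hC, hbound⟩ := hw.norm_smoothWeylSum_le_mul k
  refine ⟨C ^ 4, by positivity, fun N hN T hT => ?_⟩
  calc ∫ x in (0 : ℝ)..(T / N ^ k), ‖smoothWeylSum w B k N x‖ ^ 4
      ≤ ∫ x in (0 : ℝ)..(T / N ^ k), (C * N) ^ 4 := by
        refine intervalIntegral.integral_mono_on (by positivity)
          (Continuous.intervalIntegrable (by unfold smoothWeylSum; fun_prop) _ _)
          intervalIntegrable_const fun x _ => ?_
        gcongr
        exact hbound N hN x
    _ = C ^ 4 / N ^ k * (N ^ 4 * T) := by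
        rw [intervalIntegral.integral_const, smul_eq_mul]
        ring

lemma le_of_dyadic {F H : ℝ → ℝ} {T₀ : ℝ} (hT₀ : 0 < T₀)
    (hbase : ∀ T ∈ Icc T₀ (2 * T₀), F T ≤ H T)
    (hstep : ∀ t ≥ T₀, F (2 * t) - F t ≤ H (2 * t) - H t) {T : ℝ} (hT : T₀ ≤ T) : F T ≤ H T := by
  obtain ⟨j, hj⟩ := pow_unbounded_of_one_lt (T / T₀) one_lt_two
  rw [div_lt_iff₀ hT₀] at hj
  induction j generalizing T with
  | zero => exact hbase T ⟨hT, by linarith⟩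
  | succ j ih =>
    rcases le_or_gt T (2 * T₀) with hle | hgt
    · exact hbase T ⟨hT, hle⟩
    · have hhalf := ih (T := T / 2) (by linarith) (by rw [pow_succ] at hj; linarith)
      have := hstep (T / 2) (by linarith)
      rw [mul_div_cancel₀ T two_ne_zero] at this
      linarith

lemma le_dyadic_increment {N t γ : ℝ} (hγ : 0 ≤ γ) (hN : 0 < N) (ht : 0 < t) :
    t * (N ^ 4 / t ^ 2 + t + N ^ (2 - γ) * t ^ γ) ≤
      2 * ((N ^ 4 * (3 - 1 / (2 * t)) + (2 * t) ^ 2 + N ^ (2 - γ) * (2 * t) ^ (1 + γ)) -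
        (N ^ 4 * (3 - 1 / t) + t ^ 2 + N ^ (2 - γ) * t ^ (1 + γ))) := by
  have hpow : t ^ (1 + γ) = t * t ^ γ := by rw [rpow_add ht, rpow_one]
  have hpow2 : (2 * t) ^ (1 + γ) = 2 * 2 ^ γ * (t * t ^ γ) := by
    rw [mul_rpow two_pos.le ht.le, hpow, rpow_add two_pos, rpow_one]
  have hpole : t * (N ^ 4 / t ^ 2) =
      2 * (N ^ 4 * (3 - 1 / (2 * t)) - N ^ 4 * (3 - 1 / t)) := by
    field_simp
    ring
  have hgrow : N ^ (2 - γ) * (t * t ^ γ) ≤ N ^ (2 - γ) * (2 ^ γ * (t * t ^ γ)) := by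
    exact mul_le_mul_of_nonneg_left
      (le_mul_of_one_le_left (by positivity) (one_le_rpow one_le_two hγ)) (by positivity)
  have hnonneg : 0 ≤ N ^ (2 - γ) * (t * t ^ γ) := by positivity
  rw [hpow, hpow2]
  nlinarith [sq_nonneg t]

lemma CountingBound.integral_norm_smoothWeylSum_pow_four_le (hγ : CountingBound γ) (hγ0 : 0 ≤ γ)
    (hw : IsCutoff w A B) (hk : 1 < k) :
    ∃ C > 0, ∀ N ≥ (1 : ℝ), ∀ T ≥ (1 / 2 : ℝ),
      ∫ x in (0 : ℝ)..(T / N ^ k), ‖smoothWeylSum w B k N x‖ ^ 4 ≤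
        C / N ^ k * (N ^ 4 * (3 - 1 / T) + T ^ 2 + N ^ (2 - γ) * T ^ (1 + γ)) := by
  obtain ⟨C₀, hC₀, htrivial⟩ := hw.integral_norm_smoothWeylSum_pow_four_le_mul k
  obtain ⟨C₁, hC₁, hdyadic⟩ := hγ.integral_norm_smoothWeylSum_pow_four_dyadic_le hw hk
  refine ⟨C₀ + 2 * C₁, by positivity, fun N hN1 T hT => ?_⟩
  have hN : 0 < N := by linarith
  have hcont : Continuous fun x => ‖smoothWeylSum w B k N x‖ ^ 4 := by
    unfold smoothWeylSum
    fun_prop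
  refine le_of_dyadic (F := fun T => ∫ x in (0 : ℝ)..(T / N ^ k), ‖smoothWeylSum w B k N x‖ ^ 4)
    (H := fun T => (C₀ + 2 * C₁) / N ^ k *
      (N ^ 4 * (3 - 1 / T) + T ^ 2 + N ^ (2 - γ) * T ^ (1 + γ)))
    one_half_pos (fun T hT => ?_) (fun t ht => ?_) hT
  · have hT0 : 0 < T := one_half_pos.trans_le hT.1
    have hT1 : T ≤ 1 := by linarith [hT.2]
    have hinv : 1 / T ≤ 2 := by rw [div_le_iff₀ hT0]; linarith [hT.1]
    have hpos : 0 ≤ T ^ 2 + N ^ (2 - γ) * T ^ (1 + γ) := by positivity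
    have hle : N ^ 4 * T ≤ N ^ 4 * (3 - 1 / T) := by gcongr; linarith
    refine (htrivial N hN1 T hT0.le).trans ?_
    gcongr <;> linarith
  · have ht0 : 0 < t := one_half_pos.trans_le ht
    have hinc := le_dyadic_increment hγ0 hN ht0
    have : 0 ≤ t * (N ^ 4 / t ^ 2 + t + N ^ (2 - γ) * t ^ γ) := by positivity
    rw [intervalIntegral.integral_interval_sub_left (hcont.intervalIntegrable _ _)
      (hcont.intervalIntegrable _ _), ← mul_sub, mul_div_assoc]
    calc _ ≤ C₁ * (t / N ^ k) * (N ^ 4 / t ^ 2 + t + N ^ (2 - γ) * t ^ γ) := hdyadic N hN1 t ht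
      _ = 2 * C₁ / N ^ k * (t * (N ^ 4 / t ^ 2 + t + N ^ (2 - γ) * t ^ γ) / 2) := by ring
      _ ≤ _ := by
          gcongr ?_ / _ * ?_
          · linarith
          · linarith

end FourthMoments

section CountingBootstrap

open Set

variable {k γ : ℝ}

lemma energy_le_mul_pow_four {S : Finset ℕ} {a b N : ℝ} (ha : 0 < a) (hN : 0 < N)
    (hS : ∀ n ∈ S, (n : ℝ) ∈ Icc (a * N) (b * N)) (ω : ℕ → ℝ) (Δ : ℝ) :
    (energy S ω Δ : ℝ) ≤ (|b| * N) ^ 4 := by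
  have hsub : S ⊆ Finset.Icc 1 ⌊|b| * N⌋₊ := fun n hn => by
    have hn0 : (0 : ℝ) < n := (mul_pos ha hN).trans_le (hS n hn).1
    refine Finset.mem_Icc.2 ⟨by exact_mod_cast hn0, Nat.le_floor ((hS n hn).2.trans ?_)⟩
    gcongr
    exact le_abs_self b
  have hcard : (S.card : ℝ) ≤ |b| * N := by
    refine (Nat.cast_le.2 (Finset.card_le_card hsub)).trans ?_
    rw [Nat.card_Icc, Nat.add_sub_cancel]
    exact Nat.floor_le (by positivity)
  calc (energy S ω Δ : ℝ) ≤ (S.card : ℝ) ^ 4 := by exact_mod_cast energy_le_card_pow_four S ω Δ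
    _ ≤ (|b| * N) ^ 4 := by gcongr

lemma countingBound_two : CountingBound 2 := by
  intro k _ a ha b
  refine ⟨(|b| + 1) ^ 4, by positivity, fun N hN Δ hΔ S hS => ?_⟩
  refine (energy_le_mul_pow_four ha hN hS _ Δ).trans ?_
  have : 0 ≤ Δ * N ^ (4 - k) := by positivity
  rw [mul_pow, show (2 : ℝ) + 2 = (4 : ℕ) by norm_num, rpow_natCast]
  gcongr <;> linarith

lemma CountingBound.energy_le (hγ : CountingBound γ) (hγ0 : 0 ≤ γ) (hk : 1 < k) {a : ℝ}
    (ha : 0 < a) (b : ℝ) :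
    ∃ C > 0, ∀ N ≥ (1 : ℝ), ∀ T ≥ (1 / 2 : ℝ), ∀ S : Finset ℕ,
      (∀ n ∈ S, (n : ℝ) ∈ Icc (a * N) (b * N)) →
        (energy S (fun n => (n : ℝ) ^ k) (N ^ k / (2 * T)) : ℝ) ≤
          C * (N ^ 4 / T + T + N ^ (2 - γ) * T ^ γ) := by
  obtain ⟨w, A, B, hw, hw1⟩ :=
    exists_isCutoff_eq_one ha ((show a < 2 * a by linarith).trans_le (le_max_right b (2 * a)))
  obtain ⟨C, hC, hmoment⟩ := hγ.integral_norm_smoothWeylSum_pow_four_le hγ0 hw hk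
  refine ⟨3 * (π ^ 2 / 2) * C, by positivity, fun N hN1 T hT S hS => ?_⟩
  have hN : 0 < N := by linarith
  have hT0 : 0 < T := by linarith
  have hone : ∀ n ∈ S, w (n / N) = 1 := fun n hn => hw1 _
    ⟨(le_div_iff₀ hN).2 (hS n hn).1, ((div_le_iff₀ hN).2 (hS n hn).2).trans (le_max_left _ _)⟩
  have hsub : S ⊆ Finset.range (⌊B * N⌋₊ + 1) := fun n hn => by
    have hmem : (n : ℝ) / N ∈ Ioo A B := hw.support_subset (by simp [hone n hn])
    exact Finset.mem_range.2 (Nat.lt_succ_of_le (Nat.le_floor ((div_lt_iff₀ hN).1 hmem.2).le))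
  have : 0 ≤ 1 / T := by positivity
  have hpow : T ^ (1 + γ) = T * T ^ γ := by rw [rpow_add hT0, rpow_one]
  calc (energy S (fun n => (n : ℝ) ^ k) (N ^ k / (2 * T)) : ℝ)
      = energy S (fun n => (n : ℝ) ^ k) (1 / (2 * (T / N ^ k))) := by
        rw [← mul_div_assoc, one_div_div]
    _ ≤ π ^ 2 / (2 * (T / N ^ k)) *
          ∫ x in (0 : ℝ)..(T / N ^ k), ‖smoothWeylSum w B k N x‖ ^ 4 :=
        energy_le_integral_norm_pow_four hsub (fun n => hw.nonneg (n / N))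
          (fun n hn => (hone n hn).ge) _ (by positivity)
    _ ≤ π ^ 2 / (2 * (T / N ^ k)) *
          (C / N ^ k * (N ^ 4 * (3 - 1 / T) + T ^ 2 + N ^ (2 - γ) * T ^ (1 + γ))) := by
        gcongr
        exact hmoment N hN1 T hT
    _ ≤ π ^ 2 / (2 * (T / N ^ k)) *
          (C / N ^ k * (3 * (N ^ 4 + T ^ 2 + N ^ (2 - γ) * T ^ (1 + γ)))) := by
        have h₀ : N ^ 4 * (3 - 1 / T) ≤ N ^ 4 * 3 := by gcongr; linarith
        have h₁ : 0 ≤ N ^ (2 - γ) * T ^ (1 + γ) := by positivity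
        refine mul_le_mul_of_nonneg_left (mul_le_mul_of_nonneg_left ?_ (by positivity))
          (by positivity)
        linarith [sq_nonneg T]
    _ = _ := by
        rw [hpow]
        field_simp

lemma one_le_and_le_rpow_of_lt_pow_four {τ N Δ : ℝ} (hτ : τ ≤ 2) (hN : 0 < N) (hΔ : 0 < Δ)
    (h : Δ * N ^ (4 - k) + N ^ (2 + τ) < N ^ 4) : 1 ≤ N ∧ Δ ≤ N ^ k := by
  have hmain : 0 < Δ * N ^ (4 - k) := by positivity
  have hloss : 0 < N ^ (2 + τ) := by positivity
  constructor
  · by_contra! hlt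
    have : N ^ 4 ≤ N ^ (2 + τ) := by
      rw [← rpow_natCast]
      exact rpow_le_rpow_of_exponent_ge hN hlt.le (by norm_num; linarith)
    linarith
  · by_contra! hlt
    have : N ^ 4 ≤ Δ * N ^ (4 - k) := calc
      N ^ 4 = N ^ k * N ^ (4 - k) := by rw [← rpow_add hN, add_sub_cancel, rpow_ofNat]
      _ ≤ Δ * N ^ (4 - k) := by gcongr
    linarith

-- `T = N ^ (2 - γ / (1 + γ))` balances `T ^ γ * N ^ (2 - γ)` against `N ^ 4 / T`; the other
-- candidate is the longest `T` for which the window `N ^ k / (2 * T)` still contains `Δ`.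
lemma exists_balanced_length {N Δ : ℝ} (hγ : 0 < γ) (hN : 1 ≤ N) (hΔ : 0 < Δ)
    (hΔN : Δ ≤ N ^ k) :
    ∃ T ≥ (1 / 2 : ℝ), Δ ≤ N ^ k / (2 * T) ∧
      N ^ 4 / T + T + N ^ (2 - γ) * T ^ γ ≤
        3 * (Δ * N ^ (4 - k) + N ^ (2 + γ / (1 + γ))) := by
  set τ := γ / (1 + γ) with hτ
  have hN0 : 0 < N := by linarith
  have hτ0 : 0 < τ := by positivity
  have hτ1 : τ < 1 := (div_lt_one (by linarith)).2 (by linarith)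
  have hγτ : γ * (1 - τ) = τ := by rw [hτ]; field_simp; ring
  have hmain : 0 ≤ Δ * N ^ (4 - k) := by positivity
  set T₀ := N ^ k / (2 * Δ) with hT₀
  set T := min T₀ (N ^ (2 - τ))
  have hT₁ : T ≤ N ^ (2 - τ) := min_le_right _ _
  have hT : 1 / 2 ≤ T := by
    refine le_min ?_ (by linarith [one_le_rpow hN (show 0 ≤ 2 - τ by linarith)])
    rw [hT₀, div_le_div_iff₀ two_pos (by positivity)]
    linarith
  have : 0 < T := one_half_pos.trans_le hT
  have hfour : N ^ 4 / T ≤ 2 * (Δ * N ^ (4 - k)) + N ^ (2 + τ) := by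
    have hloss : 0 ≤ N ^ (2 + τ) := by positivity
    have h₀ : N ^ 4 / T₀ = 2 * (Δ * N ^ (4 - k)) := by
      rw [hT₀, rpow_sub hN0, rpow_ofNat]; field_simp
    have h₁ : N ^ 4 / N ^ (2 - τ) = N ^ (2 + τ) := by
      rw [← rpow_ofNat, ← rpow_sub hN0]; ring_nf
    rcases min_choice T₀ (N ^ (2 - τ)) with h | h
    · rw [show T = T₀ from h, h₀]; linarith
    · rw [show T = N ^ (2 - τ) from h, h₁]; linarith
  have hlinear : T ≤ N ^ (2 + τ) :=
    hT₁.trans (rpow_le_rpow_of_exponent_le hN (by linarith))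
  have hloss : N ^ (2 - γ) * T ^ γ ≤ N ^ (2 + τ) := by
    calc N ^ (2 - γ) * T ^ γ ≤ N ^ (2 - γ) * (N ^ (2 - τ)) ^ γ := by gcongr
      _ = N ^ (2 + τ) := by
        rw [← rpow_mul hN0.le, ← rpow_add hN0]; congr 1; linarith
  refine ⟨T, hT, ?_, by linarith⟩
  have hle : T ≤ N ^ k / (2 * Δ) := min_le_left _ _
  rw [le_div_iff₀ (by positivity)] at hle ⊢
  linarith

lemma CountingBound.improve (hγ : CountingBound γ) (hγ0 : 0 < γ) :
    CountingBound (γ / (1 + γ)) := by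
  intro k hk a ha b
  obtain ⟨C, hC, henergy⟩ := hγ.energy_le hγ0.le hk ha b
  have hτ : γ / (1 + γ) ≤ 2 := (div_le_one (by linarith)).2 (by linarith) |>.trans one_le_two
  refine ⟨|b| ^ 4 + 3 * C, by positivity, fun N hN Δ hΔ S hS => ?_⟩
  rcases le_or_gt (N ^ 4) (Δ * N ^ (4 - k) + N ^ (2 + γ / (1 + γ))) with htrivial | hlt
  · refine (energy_le_mul_pow_four ha hN hS _ Δ).trans ?_
    rw [mul_pow]
    gcongr
    linarith
  obtain ⟨hN1, hΔN⟩ := one_le_and_le_rpow_of_lt_pow_four hτ hN hΔ hlt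
  obtain ⟨T, hT, hwindow, hbalance⟩ := exists_balanced_length hγ0 hN1 hΔ hΔN
  calc (energy S (fun n => (n : ℝ) ^ k) Δ : ℝ)
      ≤ energy S (fun n => (n : ℝ) ^ k) (N ^ k / (2 * T)) := by
        exact_mod_cast energy_mono S _ hwindow
    _ ≤ C * (N ^ 4 / T + T + N ^ (2 - γ) * T ^ γ) := henergy N hN1 T hT S hS
    _ ≤ C * (3 * (Δ * N ^ (4 - k) + N ^ (2 + γ / (1 + γ)))) := by gcongr
    _ ≤ _ := by
        rw [← mul_assoc, mul_comm C]
        gcongr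
        exact le_add_of_nonneg_left (by positivity)

lemma countingBound_two_div (j : ℕ) : CountingBound (2 / (2 * j + 1)) := by
  induction j with
  | zero => simpa using countingBound_two
  | succ j ih =>
    convert ih.improve (by positivity) using 1
    push_cast
    field_simp
    ring

end CountingBootstrap

section PrimeSums

open Set

variable {δ X k ε : ℝ}

/-- The primes `p` with `δX ≤ p^k ≤ X`, the range of summation of `Sk δ X k`. -/
noncomputable def weylPrimes (δ X k : ℝ) : Finset ℕ :=
  (Finset.Icc 1 ⌊X⌋₊).filter fun p => p.Prime ∧ δ * X ≤ (p : ℝ) ^ k ∧ (p : ℝ) ^ k ≤ X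

lemma Sk_mul_eq_expSum (δ X k l α : ℝ) :
    Sk δ X k (l * α) =
      expSum (weylPrimes δ X k) (fun p => (log p : ℂ)) (fun p => l * (p : ℝ) ^ k) α := by
  refine Finset.sum_congr rfl fun p _ => ?_
  rw [mul_left_comm, mul_assoc]

lemma norm_log_le_of_mem_weylPrimes (hX : 0 ≤ X) {p : ℕ} (hp : p ∈ weylPrimes δ X k) :
    ‖(log p : ℂ)‖ ≤ log X := by
  obtain ⟨hp1, hpX⟩ := Finset.mem_Icc.1 (Finset.mem_filter.1 hp).1
  have hp1' : (1 : ℝ) ≤ p := by exact_mod_cast hp1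
  rw [Complex.norm_real, norm_of_nonneg (log_nonneg hp1')]
  exact log_le_log (by linarith) ((Nat.le_floor_iff hX).1 hpX)

lemma mem_Icc_of_mem_weylPrimes (hδ : 0 ≤ δ) (hk : 0 < k) (hX : 0 ≤ X) {p : ℕ}
    (hp : p ∈ weylPrimes δ X k) :
    (p : ℝ) ∈ Icc (δ ^ (1 / k) * X ^ (1 / k)) (1 * X ^ (1 / k)) := by
  obtain ⟨-, -, hlow, hupp⟩ := Finset.mem_filter.1 hp
  have hroot : (p : ℝ) = ((p : ℝ) ^ k) ^ (1 / k) := by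
    rw [one_div, rpow_rpow_inv p.cast_nonneg hk.ne']
  rw [← mul_rpow hδ hX, one_mul, hroot]
  constructor <;> gcongr

lemma log_pow_four_le (hε : 0 < ε) (hX : 1 ≤ X) : log X ^ 4 ≤ (4 / ε) ^ 4 * X ^ ε := by
  have hX0 : 0 ≤ X := by linarith
  calc log X ^ 4 ≤ (X ^ (ε / 4) / (ε / 4)) ^ 4 :=
        pow_le_pow_left₀ (log_nonneg hX) (log_le_rpow_div hX0 (by positivity)) 4
    _ = (4 / ε) ^ 4 * X ^ ε := by
        rw [div_pow, ← rpow_mul_natCast hX0, Nat.cast_ofNat, div_mul_cancel₀ ε four_ne_zero]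
        field_simp

lemma exists_countingBound (hε : 0 < ε) : ∃ γ, 0 < γ ∧ γ ≤ ε ∧ CountingBound γ := by
  obtain ⟨j, hj⟩ := exists_nat_gt (2 / ε)
  refine ⟨2 / (2 * j + 1), by positivity, ?_, countingBound_two_div j⟩
  rw [div_lt_iff₀ hε] at hj
  rw [div_le_iff₀ (by positivity)]
  linarith

lemma exists_energy_weylPrimes_le (hδ : 0 < δ) (hk : 1 < k) (hε : 0 < ε) :
    ∃ C > 0, ∀ X ≥ (1 : ℝ), ∀ Δ > (0 : ℝ),
      (energy (weylPrimes δ X k) (fun p => (p : ℝ) ^ k) Δ : ℝ) ≤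
        C * (Δ * X ^ (4 / k - 1) + X ^ (2 / k) * X ^ ε) := by
  obtain ⟨γ, hγ0, hγε, hγ⟩ := exists_countingBound hε
  have hk0 : 0 < k := by linarith
  obtain ⟨C, hC, hcount⟩ := hγ k hk (δ ^ (1 / k)) (by positivity) 1
  refine ⟨C, hC, fun X hX Δ hΔ => ?_⟩
  have hX0 : 0 < X := by linarith
  calc (energy (weylPrimes δ X k) (fun p => (p : ℝ) ^ k) Δ : ℝ)
      ≤ C * (Δ * (X ^ (1 / k)) ^ (4 - k) + (X ^ (1 / k)) ^ (2 + γ)) :=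
        hcount _ (by positivity) Δ hΔ _ fun p hp =>
          mem_Icc_of_mem_weylPrimes hδ.le hk0 hX0.le hp
    _ = C * (Δ * X ^ (4 / k - 1) + X ^ (2 / k) * X ^ (γ / k)) := by
        rw [← rpow_mul hX0.le, ← rpow_mul hX0.le, ← rpow_add hX0]
        congr 4 <;> field_simp
    _ ≤ C * (Δ * X ^ (4 / k - 1) + X ^ (2 / k) * X ^ ε) := by
        have : γ / k ≤ ε := (div_le_self hγ0.le hk.le).trans hγε
        gcongr

end PrimeSums

lemma intervalIntegral_le_integral {f : ℝ → ℝ} (hf : Integrable f) (hf0 : 0 ≤ f) (a b : ℝ) :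
    ∫ x in a..b, f x ≤ ∫ x, f x := by
  calc ∫ x in a..b, f x ≤ ‖∫ x in a..b, f x‖ := le_norm_self _
    _ ≤ ∫ x in Set.uIoc a b, ‖f x‖ := intervalIntegral.norm_integral_le_integral_norm_uIoc
    _ ≤ ∫ x, ‖f x‖ := setIntegral_le_integral hf.norm (.of_forall fun _ => norm_nonneg _)
    _ = ∫ x, f x := integral_congr_ae (.of_forall fun x => norm_of_nonneg (hf0 x))

theorem Sk_fourth_Keta_bound_general (δ : ℝ) (hδ : 0 < δ) (l : ℝ) (hl : l ≠ 0)
    (k ε : ℝ) (hk : 1 < k) (hε : 0 < ε) :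
    ∃ C > 0, ∀ X ≥ (1 : ℝ), ∀ η : ℝ, 0 < η → η ≤ 1 →
      Integrable (fun α => ‖Sk δ X k (l * α)‖ ^ 4 * Keta η α) ∧
      ∫ α, ‖Sk δ X k (l * α)‖ ^ 4 * Keta η α
        ≤ C * η * max (X ^ (2 / k)) (X ^ (4 / k - 1)) * X ^ ε := by
  obtain ⟨C, hC, henergy⟩ := exists_energy_weylPrimes_le hδ hk (half_pos hε)
  refine ⟨(4 / (ε / 2)) ^ 4 * (C * (1 / |l| + 1)), by positivity, fun X hX η hη hη1 => ?_⟩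
  have hX0 : 0 < X := by linarith
  simp only [Sk_mul_eq_expSum]
  refine ⟨integrable_norm_expSum_pow_mul_Keta _ _ _ 4 hη, ?_⟩
  set M := max (X ^ (2 / k)) (X ^ (4 / k - 1))
  have hE : (energy (weylPrimes δ X k) (fun p => l * (p : ℝ) ^ k) η : ℝ) ≤
      C * (1 / |l| + 1) * M * X ^ (ε / 2) := by
    have hXε : 1 ≤ X ^ (ε / 2) := one_le_rpow hX (by positivity)
    rw [energy_const_mul _ _ hl]
    calc _ ≤ C * (η / |l| * X ^ (4 / k - 1) + X ^ (2 / k) * X ^ (ε / 2)) :=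
          henergy X hX _ (by positivity)
      _ ≤ C * (1 / |l| * (M * X ^ (ε / 2)) + M * X ^ (ε / 2)) := by
          gcongr
          · exact (le_max_right _ _).trans (le_mul_of_one_le_right (by positivity) hXε)
          · exact le_max_left _ _
      _ = _ := by ring
  calc _ ≤ η * log X ^ 4 * energy (weylPrimes δ X k) (fun p => l * (p : ℝ) ^ k) η :=
        integral_norm_pow_four_mul_Keta_le hη
          (fun p hp => norm_log_le_of_mem_weylPrimes hX0.le hp) _
    _ ≤ η * ((4 / (ε / 2)) ^ 4 * X ^ (ε / 2)) * (C * (1 / |l| + 1) * M * X ^ (ε / 2)) := by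
        gcongr
        exact log_pow_four_le (half_pos hε) hX
    _ = (4 / (ε / 2)) ^ 4 * (C * (1 / |l| + 1)) * η * M * (X ^ (ε / 2) * X ^ (ε / 2)) := by ring
    _ = _ := by rw [← rpow_add hX0, add_halves]

theorem Sk_fourth_Keta_bound (δ : ℝ) (hδ0 : 0 < δ) (hδ1 : δ < 1) (l : ℝ) (hl : l ≠ 0)
    (k ε : ℝ) (hk : 1 < k) (hε : 0 < ε) :
    ∃ C > 0, ∀ X ≥ (2 : ℝ), ∀ η : ℝ, 0 < η → η < 1 → ∀ R > 1 / η, ∀ P : ℝ, 0 < P → P < X →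
      ∫ α in (P / X)..R, ‖Sk δ X k (l * α)‖ ^ 4 * Keta η α
        ≤ C * η * max (X ^ (2 / k)) (X ^ (4 / k - 1)) * X ^ ε := by
  obtain ⟨C, hC, hbound⟩ := Sk_fourth_Keta_bound_general δ hδ0 l hl k ε hk hε
  refine ⟨C, hC, fun X hX η hη hη1 R _ P _ _ => ?_⟩
  obtain ⟨hint, hle⟩ := hbound X (one_le_two.trans hX) η hη hη1.le
  exact (intervalIntegral_le_integral hint (fun α => by unfold Keta; positivity) _ _).trans hle
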